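/- arXiv:1906.07989 — 2 statements merged into one kernel-verified Lean document; each statement's English description precedes it below -/
import Mathlib

section
/- For every ε > 0 there exists a constant C_ε > 0 such that for every positive integer X, ∫_{[0,1]³} |∑_{j=1}^{X} e(x₁ j + x₂ j² + x₃ j³)|¹² dx₁ dx₂ dx₃ ≤ C_ε X^{6+ε}. -/
/-!
The estimate is proved by efficient congruencing, in the simplified form that Heath-Brown gave to
Wooley's argument for the cubic case. No decoupling is used.

For a finite set `S` of integers, `J S` is the twelfth moment over the unit cube of the exponential
sum `f_S` along the moment curve, which counts the solutions in `S` of the Vinogradov system in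
twelve variables. The system is invariant under affine maps (`J_affine`), so a bound
`J([1, N]) ≪ N ^ (6 + Δ)` rescales to residue classes modulo `q` (`J_cls_le`).

For a prime `p ≥ 5` and `ξ ≢ η (mod p)`, let `A` and `B` be the classes of `ξ` modulo `p ^ a` and
of `η` modulo `p ^ b`, and consider the mixed moments `∫ |f_A| ^ i |f_B| ^ j` with `i + j = 12`.
After translation by `η` the variables in `B` are multiples of `p ^ b`, so that the variables in `A`
satisfy the linear, quadratic and cubic congruences modulo `p ^ b`, `p ^ (2 b)` and `p ^ (3 b)`.

* For `(i, j) = (2, 10)` the cubic congruence forces the two variables in `A` to agree modulo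
  `p ^ (3 b)`. So `a` can be replaced by `3 b` at a cost `p ^ (3 b - a)` (`refine_two`).
* For `(i, j) = (4, 8)` the quadratic and cubic congruences modulo `p ^ (2 b)` imply that
  `(n₁ - n₃) (n₁ + n₃ - n₂ - n₄)` is divisible by `p ^ (2 b)` (`factor_dvd`). Counting the
  possible quadruples of classes modulo `p ^ (2 b - a)` (`card_good_le`), `a` can be replaced by
  `2 b - a` at the cost `p ^ (4 (b - a))`, up to a factor `2 (b - a) + 1` (`refine_four`).

Hölder's inequality (`mom_holder`) passes between these moments and allows the roles of `ξ` and
`η` to be exchanged. If `J([1, N]) ≪ N ^ (6 + Δ)`, each round gains another factor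
`p ^ (-(Δ / 6) (3 b - a))` in the `(4, 8)` moment (`iterate_bound`), and the number of rounds is
limited only by the requirement that the moduli stay below `X`.

A broad-narrow decomposition over the residue classes modulo `p` (`J_broad_narrow`) reduces `J` to
the diagonal terms, which save by rescaling, and to the `(6, 6)` moments of distinct classes, which
lie between `(4, 8)` and `(8, 4)`. For `Δ ≥ ε` and `p` a small power of `X`, this lowers the
exponent `6 + Δ` by an amount depending on `ε` only (`Adm.improve`). Starting from the trivial
exponent `12`, finitely many steps lead to `6 + ε` (`adm_six_add`).
-/

open MeasureTheory Real

noncomputable section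

/-- Points of `ℝ³`. -/
abbrev E3 := Fin 3 → ℝ

/-- Points of `ℝ²`. -/
abbrev E2 := Fin 2 → ℝ

/-- `eR z = e(z) = exp(2πiz)`. -/
def eR (z : ℝ) : ℂ := Complex.exp (2 * Real.pi * Complex.I * z)

/-- Extension operator along the moment curve `γ(ξ) = (ξ, ξ², ξ³)` over the interval `[l, r]`. -/
def momExt (g : ℝ → ℂ) (l r : ℝ) (x : E3) : ℂ :=
  ∫ ξ in l..r, g ξ * eR (x 0 * ξ + x 1 * ξ ^ 2 + x 2 * ξ ^ 3)

/-- The `L¹²(ℝ³)` norm. -/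
def L12 (f : E3 → ℂ) : ℝ := (∫ x : E3, ‖f x‖ ^ (12 : ℕ)) ^ ((1 : ℝ) / 12)

/-- `∑_{J ∈ P_δ(I)} ‖E_J g‖_{L¹²}⁴` where `I = [l, l + n·δ]` is partitioned into `n` intervals
of length `δ`. -/
def decSum (g : ℝ → ℂ) (l δ : ℝ) (n : ℕ) : ℝ :=
  ∑ k ∈ Finset.range n, L12 (momExt g (l + k * δ) (l + (k + 1) * δ)) ^ 4

/-- `δ > 0` and `δ⁻¹ ∈ ℕ`. -/
def IsRecipNat (δ : ℝ) : Prop := 0 < δ ∧ ∃ n : ℕ, (n : ℝ) = δ⁻¹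

/-- `x ∈ ℕ` (as a real number). -/
def IsNatReal (x : ℝ) : Prop := ∃ n : ℕ, (n : ℝ) = x

/-- The `ℓ⁴L¹²` decoupling constant `D(δ)`: the smallest constant `C` such that
`‖E_{[0,1]} g‖₁₂ ≤ C (∑_{J ∈ P_δ} ‖E_J g‖₁₂⁴)^{1/4}` for all `g`. -/
def Dconst (δ : ℝ) : ℝ :=
  sInf {C : ℝ | 0 ≤ C ∧ ∀ g : ℝ → ℂ,
    L12 (momExt g 0 1) ≤ C * decSum g 0 δ ⌊δ⁻¹⌋₊ ^ ((1 : ℝ) / 4)}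

/-- The weight `φ_{T_I, E}` associated to the parallelepiped `T_I` dual to the interval `I`
with center `c` and length `len`; it is `L¹`-normalized and decays like the `E`-th power of the
non-isotropic distance `‖(len (x·γ'(c)), len² (x·γ''(c)), len³ (x·γ'''(c)))‖`. -/
def phiT (c len E : ℝ) (x : E3) : ℝ :=
  3 / 2 * len ^ 6 *
    (1 + Real.sqrt ((len * (x 0 + 2 * c * x 1 + 3 * c ^ 2 * x 2)) ^ 2 +
      (len ^ 2 * (2 * x 1 + 6 * c * x 2)) ^ 2 + (len ^ 3 * (6 * x 2)) ^ 2)) ^ (-E)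

/-- The convolution `(|E_{[l,r]} g|^p ∗ φ)(x)`. -/
def convPow (g : ℝ → ℂ) (l r : ℝ) (p : ℕ) (φ : E3 → ℝ) (x : E3) : ℝ :=
  ∫ y : E3, ‖momExt g l r y‖ ^ p * φ (x - y)

/-- The bilinear integral `∫_{ℝ³} (|E_I g|^p ∗ φ_{T_I,E}) (|E_{I'} g|^q ∗ φ_{T_{I'},E})`
where `I = [lI, lI + sI]` and `I' = [lI', lI' + sI']`. -/
def biInt (g : ℝ → ℂ) (p q : ℕ) (lI sI lI' sI' E : ℝ) : ℝ :=
  ∫ x : E3, convPow g lI (lI + sI) p (phiT (lI + sI / 2) sI E) x *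
    convPow g lI' (lI' + sI') q (phiT (lI' + sI' / 2) sI' E) x

/-- The intervals `[l₁, l₁+s₁]` and `[l₂, l₂+s₂]` are at distance at least `ν`. -/
def IntSep (l₁ s₁ l₂ s₂ ν : ℝ) : Prop := l₁ + s₁ + ν ≤ l₂ ∨ l₂ + s₂ + ν ≤ l₁

/-- The first bilinear constant `M_{1,a,b}(δ,ν,E)`: the smallest constant `C` such that
`∫ (|E_I g|² ∗ φ_{T_I,E})(|E_{I'} g|¹⁰ ∗ φ_{T_{I'},E})
  ≤ C¹² (∑_{J ∈ P_δ(I)} ‖E_J g‖₁₂⁴)^{1/2} (∑_{J' ∈ P_δ(I')} ‖E_{J'} g‖₁₂⁴)^{5/2}`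
for all `g` and all `I ∈ P_{ν^a}([0,1])`, `I' ∈ P_{ν^b}([0,1])` with `dist(I,I') ≥ ν`. -/
def M1 (δ ν : ℝ) (a b : ℕ) (E : ℝ) : ℝ :=
  sInf {C : ℝ | 0 ≤ C ∧ ∀ g : ℝ → ℂ, ∀ i j : ℕ,
    i < ⌊ν⁻¹⌋₊ ^ a → j < ⌊ν⁻¹⌋₊ ^ b →
    IntSep (i * ν ^ a) (ν ^ a) (j * ν ^ b) (ν ^ b) ν →
    biInt g 2 10 (i * ν ^ a) (ν ^ a) (j * ν ^ b) (ν ^ b) E ≤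
      C ^ 12 * decSum g (i * ν ^ a) δ ⌊ν ^ a / δ⌋₊ ^ ((1 : ℝ) / 2) *
        decSum g (j * ν ^ b) δ ⌊ν ^ b / δ⌋₊ ^ ((5 : ℝ) / 2)}

/-- The second bilinear constant `M_{2,a,b}(δ,ν,E)`: the smallest constant `C` such that
`∫ (|E_I g|⁴ ∗ φ_{T_I,E})(|E_{I'} g|⁸ ∗ φ_{T_{I'},E})
  ≤ C¹² (∑_{J ∈ P_δ(I)} ‖E_J g‖₁₂⁴) (∑_{J' ∈ P_δ(I')} ‖E_{J'} g‖₁₂⁴)²`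
for all `g` and all `I ∈ P_{ν^a}([0,1])`, `I' ∈ P_{ν^b}([0,1])` with `dist(I,I') ≥ ν`. -/
def M2 (δ ν : ℝ) (a b : ℕ) (E : ℝ) : ℝ :=
  sInf {C : ℝ | 0 ≤ C ∧ ∀ g : ℝ → ℂ, ∀ i j : ℕ,
    i < ⌊ν⁻¹⌋₊ ^ a → j < ⌊ν⁻¹⌋₊ ^ b →
    IntSep (i * ν ^ a) (ν ^ a) (j * ν ^ b) (ν ^ b) ν →
    biInt g 4 8 (i * ν ^ a) (ν ^ a) (j * ν ^ b) (ν ^ b) E ≤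
      C ^ 12 * decSum g (i * ν ^ a) δ ⌊ν ^ a / δ⌋₊ *
        decSum g (j * ν ^ b) δ ⌊ν ^ b / δ⌋₊ ^ 2}

/-- `ν ∈ 2^{-2^ℕ}`, i.e. `ν = 2^{-2^k}` for some `k ∈ ℕ`. -/
def IsNu (ν : ℝ) : Prop := ∃ k : ℕ, ν = ((2 : ℝ) ^ (2 ^ k))⁻¹

/-- Extension operator for the parabola over the interval `[l, r]`. -/
def parExt (g : ℝ → ℂ) (l r : ℝ) (x : E2) : ℂ :=
  ∫ ξ in l..r, g ξ * eR (x 0 * ξ + x 1 * ξ ^ 2)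

/-- The weight `w_{B,E}` associated to a ball (or square) in `ℝ²` with center `c` and
radius (resp. side length) `R`. -/
def wB2 (c : E2) (R E : ℝ) (x : E2) : ℝ :=
  (1 + Real.sqrt ((x 0 - c 0) ^ 2 + (x 1 - c 1) ^ 2) / R) ^ (-E)

/-- The weighted `L⁴` norm `(∫_{ℝ²} |f|⁴ w)^{1/4}`. -/
def L4w (f : E2 → ℂ) (w : E2 → ℝ) : ℝ :=
  (∫ x : E2, ‖f x‖ ^ 4 * w x) ^ ((1 : ℝ) / 4)

namespace VMV

/-! ### Trigonometric polynomials on the cube -/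

/-- Lebesgue measure restricted to the unit cube `[0,1]³`. -/
def cubeMeas : Measure E3 :=
  volume.restrict (Set.univ.pi fun _ : Fin 3 => Set.Icc (0 : ℝ) 1)

instance : IsFiniteMeasure cubeMeas := by
  have h : IsCompact (Set.univ.pi fun _ : Fin 3 => Set.Icc (0 : ℝ) 1) :=
    isCompact_univ_pi fun _ => isCompact_Icc
  exact ⟨by rw [cubeMeas, Measure.restrict_apply_univ]; exact h.measure_lt_top⟩

lemma integrable_of_cont {E : Type*} [NormedAddCommGroup E]
    {g : E3 → E} (hg : Continuous g) : Integrable g cubeMeas := by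
  have h : IsCompact (Set.univ.pi fun _ : Fin 3 => Set.Icc (0 : ℝ) 1) :=
    isCompact_univ_pi fun _ => isCompact_Icc
  exact hg.continuousOn.integrableOn_compact h

/-- The character `x ↦ e(v · x)` of `ℝ³` with frequency `v ∈ ℤ³`. -/
def chi (v : Fin 3 → ℤ) (x : E3) : ℂ :=
  eR (x 0 * (v 0 : ℝ) + x 1 * (v 1 : ℝ) + x 2 * (v 2 : ℝ))

lemma eR_add (s t : ℝ) : eR (s + t) = eR s * eR t := by
  simp only [eR]; rw [← Complex.exp_add]; push_cast; ring_nf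

lemma eR_zero : eR 0 = 1 := by simp [eR]

lemma norm_eR (s : ℝ) : ‖eR s‖ = 1 := by
  rw [eR, show (2 * (Real.pi : ℂ) * Complex.I * s) = ((2 * Real.pi * s : ℝ) : ℂ) * Complex.I by
    push_cast; ring]
  exact Complex.norm_exp_ofReal_mul_I _

lemma continuous_eR : Continuous eR := by unfold eR; fun_prop

lemma chi_add (v w : Fin 3 → ℤ) : chi (v + w) = chi v * chi w := by
  ext x
  simp only [chi, Pi.mul_apply, Pi.add_apply]
  rw [← eR_add]; push_cast; ring_nf

lemma chi_zero : chi 0 = 1 := by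
  ext x; simp [chi, eR_zero]

lemma norm_chi (v : Fin 3 → ℤ) (x : E3) : ‖chi v x‖ = 1 := norm_eR _

lemma chi_neg (v : Fin 3 → ℤ) (x : E3) : chi (-v) x = star (chi v x) := by
  have h1 : chi v x * chi (-v) x = 1 := by
    have := congrFun (chi_add v (-v)) x
    rw [add_neg_cancel, chi_zero] at this
    exact this.symm
  have h2 : chi v x * star (chi v x) = 1 := by
    have := Complex.mul_conj (chi v x)
    rw [Complex.normSq_eq_norm_sq, norm_chi] at this
    simpa using this
  have h3 : chi v x ≠ 0 := by
    intro h; rw [h] at h1; simp at h1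
  exact mul_left_cancel₀ h3 (h1.trans h2.symm)

lemma continuous_chi (v : Fin 3 → ℤ) : Continuous (chi v) := by
  unfold chi; exact continuous_eR.comp (by fun_prop)

lemma integral_eR (k : ℤ) :
    ∫ t in Set.Icc (0 : ℝ) 1, eR (t * (k : ℝ)) = if k = 0 then 1 else 0 := by
  rw [integral_Icc_eq_integral_Ioc, ← intervalIntegral.integral_of_le zero_le_one]
  split_ifs with h
  · subst h; simp [eR_zero]
  · have hc : (2 * (Real.pi : ℂ) * Complex.I * k) ≠ 0 := by
      have : (k : ℂ) ≠ 0 := by exact_mod_cast h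
      have := Complex.two_pi_I_ne_zero
      simp_all
    have := integral_exp_mul_complex (a := 0) (b := 1) hc
    have h2 : Complex.exp (2 * (Real.pi : ℂ) * Complex.I * k) = 1 := by
      rw [Complex.exp_eq_one_iff]; exact ⟨k, by ring⟩
    calc ∫ t in (0 : ℝ)..1, eR (t * (k : ℝ))
        = ∫ t in (0 : ℝ)..1, Complex.exp (2 * (Real.pi : ℂ) * Complex.I * k * t) := by
          congr 1; ext t; simp only [eR]; push_cast; ring_nf
      _ = 0 := by rw [this]; simp [h2]

lemma integral_chi (v : Fin 3 → ℤ) :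
    ∫ x, chi v x ∂cubeMeas = if v = 0 then 1 else 0 := by
  have h1 : ∀ x : E3, chi v x = ∏ i, eR (x i * (v i : ℝ)) := by
    intro x; simp only [chi, Fin.prod_univ_three, eR_add]
  simp_rw [h1]
  rw [cubeMeas, volume_pi, Measure.restrict_pi_pi,
    integral_fintype_prod_eq_prod (fun i (t : ℝ) => eR (t * (v i : ℝ)))]
  simp_rw [integral_eR]
  rw [Finset.prod_ite_zero]
  simp [funext_iff]

/-- The point `(n, n², n³)` of the moment curve. -/
def gam (n : ℤ) : Fin 3 → ℤ := ![n, n ^ 2, n ^ 3]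

/-- The exponential sum `∑_{n ∈ S} e(x₀ n + x₁ n² + x₂ n³)`. -/
def esum (S : Finset ℤ) (x : E3) : ℂ := ∑ n ∈ S, chi (gam n) x

lemma continuous_esum (S : Finset ℤ) : Continuous (esum S) := by
  unfold esum; exact continuous_finsetSum _ fun n _ => continuous_chi _

/-- `Spec V g` says that `g` is a trigonometric polynomial all of whose frequencies lie in `V`. -/
def Spec (V : Set (Fin 3 → ℤ)) (g : E3 → ℂ) : Prop :=
  g ∈ Submodule.span ℂ (chi '' V)

open scoped Pointwise in
lemma Spec.mul {V W : Set (Fin 3 → ℤ)} {g h : E3 → ℂ} (hg : Spec V g) (hh : Spec W h) :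
    Spec (V + W) (g * h) := by
  have h1 := Submodule.mul_mem_mul hg hh
  rw [Submodule.span_mul_span] at h1
  refine Submodule.span_mono ?_ h1
  rintro _ ⟨_, ⟨v, hv, rfl⟩, _, ⟨w, hw, rfl⟩, rfl⟩
  exact ⟨v + w, Set.add_mem_add hv hw, chi_add v w⟩

lemma Spec.integral_eq_zero {V : Set (Fin 3 → ℤ)} {g : E3 → ℂ} (hg : Spec V g)
    (h0 : (0 : Fin 3 → ℤ) ∉ V) : ∫ x, g x ∂cubeMeas = 0 := by
  suffices h : Continuous g ∧ ∫ x, g x ∂cubeMeas = 0 from h.2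
  unfold Spec at hg
  induction hg using Submodule.span_induction with
  | mem g hg =>
    obtain ⟨v, hv, rfl⟩ := hg
    refine ⟨continuous_chi v, ?_⟩
    rw [integral_chi, if_neg]
    rintro rfl; exact h0 hv
  | zero => exact ⟨continuous_const, by simp⟩
  | add g h _ _ hg hh =>
    refine ⟨hg.1.add hh.1, ?_⟩
    simp only [Pi.add_apply]
    rw [integral_add (integrable_of_cont hg.1) (integrable_of_cont hh.1), hg.2, hh.2, add_zero]
  | smul c g _ hg =>
    refine ⟨hg.1.const_smul c, ?_⟩
    simp only [Pi.smul_apply]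
    rw [integral_smul, hg.2, smul_zero]

lemma spec_esum (S : Finset ℤ) : Spec (gam '' S) (esum S) := by
  have : esum S = ∑ n ∈ S, chi (gam n) := by ext x; simp [esum]
  rw [this]
  exact Submodule.sum_mem _ fun n hn => Submodule.subset_span ⟨_, ⟨n, hn, rfl⟩, rfl⟩

lemma spec_star_esum (S : Finset ℤ) :
    Spec ((fun n => -gam n) '' S) (fun x => star (esum S x)) := by
  have : (fun x => star (esum S x)) = ∑ n ∈ S, chi (-gam n) := by
    ext x; simp only [esum, star_sum, Finset.sum_apply, chi_neg]
  rw [this]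
  exact Submodule.sum_mem _ fun n hn => Submodule.subset_span ⟨_, ⟨n, hn, rfl⟩, rfl⟩

/-- Powers of `|∑_{n ∈ S} e(⋯)|²` have frequencies in any subgroup that contains all
differences of points of the curve with parameter in `S`. -/
lemma spec_pow (S : Finset ℤ) (L : AddSubgroup (Fin 3 → ℤ))
    (hL : ∀ n ∈ S, ∀ m ∈ S, gam n - gam m ∈ L) (k : ℕ) :
    Spec (L : Set (Fin 3 → ℤ)) (fun x => ((‖esum S x‖ ^ (2 * k) : ℝ) : ℂ)) := by
  induction k with
  | zero =>
    refine Submodule.subset_span ⟨0, L.zero_mem, ?_⟩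
    rw [chi_zero]; ext x; simp
  | succ k ih =>
    have h1 := ((spec_esum S).mul (spec_star_esum S)).mul ih
    have h2 : (fun x => ((‖esum S x‖ ^ (2 * (k + 1)) : ℝ) : ℂ)) =
        esum S * (fun x => star (esum S x)) * (fun x => ((‖esum S x‖ ^ (2 * k) : ℝ) : ℂ)) := by
      ext x
      simp only [Pi.mul_apply]
      have := Complex.mul_conj (esum S x)
      rw [Complex.normSq_eq_norm_sq] at this
      rw [Complex.star_def, this]; push_cast; ring
    rw [h2]
    refine Submodule.span_mono (Set.image_mono ?_) h1
    rintro _ ⟨_, ⟨_, ⟨n, hn, rfl⟩, _, ⟨m, hm, rfl⟩, rfl⟩, l, hl, rfl⟩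
    have := L.add_mem (hL n hn m hm) hl
    rwa [sub_eq_add_neg] at this

/-! ### Mixed moments and Hölder's inequality -/

/-- Hölder's inequality in its log-convexity form. -/
lemma holder {u v : E3 → ℝ} (hu : Continuous u) (hv : Continuous v) (hu0 : ∀ x, 0 ≤ u x)
    (hv0 : ∀ x, 0 ≤ v x) {s t : ℝ} (hs : 0 < s) (ht : 0 < t) (hst : s + t = 1) :
    ∫ x, u x ^ s * v x ^ t ∂cubeMeas ≤
      (∫ x, u x ∂cubeMeas) ^ s * (∫ x, v x ∂cubeMeas) ^ t := by
  have hpq : (1 / s).HolderConjugate (1 / t) := by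
    rw [Real.holderConjugate_iff]
    constructor
    · rw [lt_div_iff₀ hs]; linarith
    · simpa using hst
  have key : ∀ {w : E3 → ℝ} {r : ℝ}, Continuous w → (∀ x, 0 ≤ w x) → 0 < r →
      MemLp (fun x => w x ^ r) (ENNReal.ofReal (1 / r)) cubeMeas := by
    intro w r hw hw0 hr
    have hc : Continuous fun x => w x ^ r := hw.rpow_const fun x => Or.inr hr.le
    rw [← integrable_norm_rpow_iff hc.aestronglyMeasurable (by simpa using hr) (by simp)]
    refine integrable_of_cont ?_
    exact hc.norm.rpow_const fun x => Or.inr ENNReal.toReal_nonneg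
  have := integral_mul_le_Lp_mul_Lq_of_nonneg (μ := cubeMeas) hpq
    (f := fun x => u x ^ s) (g := fun x => v x ^ t)
    (Filter.Eventually.of_forall fun x => Real.rpow_nonneg (hu0 x) s)
    (Filter.Eventually.of_forall fun x => Real.rpow_nonneg (hv0 x) t)
    (key hu hu0 hs) (key hv hv0 ht)
  have e1 : ∀ x, (u x ^ s) ^ (1 / s) = u x := fun x => by
    rw [← Real.rpow_mul (hu0 x), mul_one_div_cancel hs.ne', Real.rpow_one]
  have e2 : ∀ x, (v x ^ t) ^ (1 / t) = v x := fun x => by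
    rw [← Real.rpow_mul (hv0 x), mul_one_div_cancel ht.ne', Real.rpow_one]
  simpa only [e1, e2, one_div_one_div] using this

/-- The mixed moment `∫ |f_A|^i |f_B|^j` of two exponential sums along the moment curve. -/
def mom (A B : Finset ℤ) (i j : ℕ) : ℝ :=
  ∫ x, ‖esum A x‖ ^ i * ‖esum B x‖ ^ j ∂cubeMeas

lemma mom_nonneg (A B : Finset ℤ) (i j : ℕ) : 0 ≤ mom A B i j :=
  integral_nonneg fun _ => by positivity

lemma mom_symm (A B : Finset ℤ) (i j : ℕ) : mom A B i j = mom B A j i := by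
  simp only [mom, mul_comm]

/-- Moments are log-convex: `(i, j)` is the convex combination of `(i₁, j₁)` and `(i₂, j₂)` with
weights `s` and `t`. -/
lemma mom_holder (A B : Finset ℤ) {i j i₁ j₁ i₂ j₂ : ℕ} {s t : ℝ} (hs : 0 < s) (ht : 0 < t)
    (hst : s + t = 1) (hi : (i : ℝ) = i₁ * s + i₂ * t) (hj : (j : ℝ) = j₁ * s + j₂ * t) :
    mom A B i j ≤ mom A B i₁ j₁ ^ s * mom A B i₂ j₂ ^ t := by
  have ca := (continuous_esum A).norm
  have cb := (continuous_esum B).norm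
  have := holder (u := fun x => ‖esum A x‖ ^ i₁ * ‖esum B x‖ ^ j₁)
    (v := fun x => ‖esum A x‖ ^ i₂ * ‖esum B x‖ ^ j₂)
    ((ca.pow _).mul (cb.pow _)) ((ca.pow _).mul (cb.pow _))
    (fun _ => by positivity) (fun _ => by positivity) hs ht hst
  refine le_of_eq_of_le ?_ this
  unfold mom
  congr 1; ext x
  have key : ∀ {y : ℝ} {k k₁ k₂ : ℕ}, 0 ≤ y → (k : ℝ) = k₁ * s + k₂ * t →
      y ^ k = (y ^ k₁) ^ s * (y ^ k₂) ^ t := by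
    intro y k k₁ k₂ hy hk
    rw [← Real.rpow_natCast, ← Real.rpow_natCast, ← Real.rpow_natCast, ← Real.rpow_mul hy,
      ← Real.rpow_mul hy, ← Real.rpow_add_of_nonneg hy (by positivity) (by positivity), hk]
  rw [key (norm_nonneg (esum A x)) hi, key (norm_nonneg (esum B x)) hj,
    Real.mul_rpow (by positivity) (by positivity), Real.mul_rpow (by positivity) (by positivity)]
  ring

/-! ### Orthogonality -/

/-- Orthogonality combined with the triangle inequality: after expanding `|∑ hᵢ|²`, only the
pairs in `good` contribute, and each of them contributes at most `M`. -/
lemma sum_sq_le {ι : Type*} [DecidableEq ι] (I : Finset ι) (h : ι → E3 → ℂ)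
    (hc : ∀ i, Continuous (h i)) (W : E3 → ℝ) (hW : Continuous W) (hW0 : ∀ x, 0 ≤ W x)
    (good : Finset (ι × ι)) (M : ℝ) (hM0 : 0 ≤ M)
    (hzero : ∀ i ∈ I, ∀ j ∈ I, (i, j) ∉ good →
      ∫ x, h i x * star (h j x) * (W x : ℂ) ∂cubeMeas = 0)
    (hM : ∀ i ∈ I, ∀ j ∈ I, ∫ x, ‖h i x‖ * ‖h j x‖ * W x ∂cubeMeas ≤ M) :
    ∫ x, ‖∑ i ∈ I, h i x‖ ^ 2 * W x ∂cubeMeas ≤ good.card * M := by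
  have e1 : ∀ x, ((‖∑ i ∈ I, h i x‖ ^ 2 * W x : ℝ) : ℂ) =
      ∑ p ∈ I ×ˢ I, h p.1 x * star (h p.2 x) * (W x : ℂ) := by
    intro x
    have := Complex.mul_conj (∑ i ∈ I, h i x)
    rw [Complex.normSq_eq_norm_sq] at this
    push_cast at this ⊢
    rw [← this, map_sum, Finset.sum_mul_sum, ← Finset.sum_product', Finset.sum_mul]
    rfl
  have hcont : ∀ p : ι × ι, Continuous fun x => h p.1 x * star (h p.2 x) * (W x : ℂ) :=
    fun p => (((hc _).mul (hc _).star).mul (Complex.continuous_ofReal.comp hW))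
  have e2 : ((∫ x, ‖∑ i ∈ I, h i x‖ ^ 2 * W x ∂cubeMeas : ℝ) : ℂ) =
      ∑ p ∈ I ×ˢ I, ∫ x, h p.1 x * star (h p.2 x) * (W x : ℂ) ∂cubeMeas := by
    rw [← integral_complex_ofReal]
    simp_rw [e1]
    exact integral_finsetSum _ fun p _ => integrable_of_cont (hcont p)
  have e3 : ∑ p ∈ I ×ˢ I, ∫ x, h p.1 x * star (h p.2 x) * (W x : ℂ) ∂cubeMeas =
      ∑ p ∈ (I ×ˢ I).filter (· ∈ good),
        ∫ x, h p.1 x * star (h p.2 x) * (W x : ℂ) ∂cubeMeas := by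
    rw [Finset.sum_filter]
    refine Finset.sum_congr rfl fun p hp => ?_
    rw [Finset.mem_product] at hp
    split_ifs with hg
    · rfl
    · exact hzero _ hp.1 _ hp.2 hg
  have e4 : ∫ x, ‖∑ i ∈ I, h i x‖ ^ 2 * W x ∂cubeMeas ≤
      ‖((∫ x, ‖∑ i ∈ I, h i x‖ ^ 2 * W x ∂cubeMeas : ℝ) : ℂ)‖ := by
    rw [Complex.norm_real]; exact le_abs_self _
  refine e4.trans ?_
  rw [e2, e3]
  refine (norm_sum_le_of_le _ (f := _) (fun p hp => ?_)).trans
    (b := ∑ p ∈ (I ×ˢ I).filter (· ∈ good), M) ?_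
  · rw [Finset.mem_filter, Finset.mem_product] at hp
    refine (norm_integral_le_integral_norm _).trans ?_
    refine le_of_eq_of_le ?_ (hM _ hp.1.1 _ hp.1.2)
    congr 1; ext x
    rw [norm_mul, norm_mul, norm_star, Complex.norm_real, Real.norm_of_nonneg (hW0 x)]
  · rw [Finset.sum_const, nsmul_eq_mul]
    refine mul_le_mul_of_nonneg_right ?_ hM0
    exact_mod_cast Finset.card_le_card fun p hp => (Finset.mem_filter.mp hp).2

/-! ### The twelfth moment, affine invariance and residue classes -/

/-- The twelfth moment of the exponential sum over `S`. -/
def J (S : Finset ℤ) : ℝ := ∫ x, ‖esum S x‖ ^ 12 ∂cubeMeas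

lemma mom_right (A B : Finset ℤ) : mom A B 0 12 = J B := by simp [mom, J]

lemma mom_left (A B : Finset ℤ) : mom A B 12 0 = J A := by simp [mom, J]

lemma J_nonneg (S : Finset ℤ) : 0 ≤ J S := integral_nonneg fun _ => by positivity

/-- The solutions in `S` of the degree three Vinogradov system in twelve variables. -/
def sols (S : Finset ℤ) : Finset ((Fin 6 → ℤ) × (Fin 6 → ℤ)) :=
  (Fintype.piFinset (fun _ : Fin 6 => S) ×ˢ Fintype.piFinset (fun _ : Fin 6 => S)).filter
    fun p => ∑ i, gam (p.1 i) = ∑ i, gam (p.2 i)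

lemma chi_sum {ι : Type*} (s : Finset ι) (v : ι → Fin 3 → ℤ) (x : E3) :
    chi (∑ i ∈ s, v i) x = ∏ i ∈ s, chi (v i) x := by
  classical
  induction s using Finset.induction_on with
  | empty => simp [chi_zero]
  | insert a s ha ih => rw [Finset.sum_insert ha, Finset.prod_insert ha, chi_add, Pi.mul_apply, ih]

/-- Orthogonality: the twelfth moment counts solutions. -/
lemma J_eq_card (S : Finset ℤ) : J S = (sols S).card := by
  have e0 : ∀ x, esum S x ^ 6 =
      ∑ a ∈ Fintype.piFinset (fun _ : Fin 6 => S), chi (∑ i, gam (a i)) x := by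
    intro x
    have := Finset.prod_univ_sum (fun _ : Fin 6 => S) (fun _ n => chi (gam n) x)
    rw [Finset.prod_const, Finset.card_univ, Fintype.card_fin] at this
    simp_rw [chi_sum]
    exact this
  have e1 : ∀ x, ((‖esum S x‖ ^ 12 : ℝ) : ℂ) =
      ∑ p ∈ Fintype.piFinset (fun _ : Fin 6 => S) ×ˢ Fintype.piFinset (fun _ : Fin 6 => S),
        chi (∑ i, gam (p.1 i) - ∑ i, gam (p.2 i)) x := by
    intro x
    have := Complex.mul_conj (esum S x ^ 6)
    rw [Complex.normSq_eq_norm_sq, norm_pow] at this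
    rw [show ‖esum S x‖ ^ 12 = (‖esum S x‖ ^ 6) ^ 2 by ring, ← this, e0, map_sum,
      Finset.sum_mul_sum, ← Finset.sum_product']
    refine Finset.sum_congr rfl fun p _ => ?_
    rw [sub_eq_add_neg, chi_add, Pi.mul_apply, chi_neg]; rfl
  have e2 : ((J S : ℝ) : ℂ) = ((sols S).card : ℂ) := by
    rw [J, ← integral_complex_ofReal]
    simp_rw [e1]
    rw [integral_finsetSum _ fun p _ => integrable_of_cont (continuous_chi _)]
    simp_rw [integral_chi, sub_eq_zero]
    rw [sols, Finset.sum_boole]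
  exact_mod_cast e2

lemma gam_affine {c q : ℤ} (hq : q ≠ 0) (u w : Fin 6 → ℤ)
    (he : ∑ i, gam (c + q * u i) = ∑ i, gam (c + q * w i)) :
    ∑ i, gam (u i) = ∑ i, gam (w i) := by
  have g1 : ∑ i, u i = ∑ i, w i := by
    have := congrFun he 0
    simp only [gam, Finset.sum_apply, Matrix.cons_val_zero, Finset.sum_add_distrib,
      ← Finset.mul_sum] at this
    exact mul_left_cancel₀ hq (add_left_cancel this)
  have g2 : ∑ i, u i ^ 2 = ∑ i, w i ^ 2 := by
    have := congrFun he 1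
    have ex : ∀ m : ℤ, (c + q * m) ^ 2 = (c ^ 2 + 2 * c * q * m) + q ^ 2 * m ^ 2 := by
      intro m; ring
    simp only [gam, Finset.sum_apply, Matrix.cons_val_one, Matrix.cons_val_zero, ex,
      Finset.sum_add_distrib, ← Finset.mul_sum] at this
    rw [g1] at this
    exact mul_left_cancel₀ (pow_ne_zero 2 hq) (add_left_cancel this)
  have g3 : ∑ i, u i ^ 3 = ∑ i, w i ^ 3 := by
    have := congrFun he 2
    have ex : ∀ m : ℤ, (c + q * m) ^ 3 =
        (c ^ 3 + 3 * c ^ 2 * q * m + 3 * c * q ^ 2 * m ^ 2) + q ^ 3 * m ^ 3 := by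
      intro m; ring
    simp only [gam, Finset.sum_apply, Matrix.cons_val, ex,
      Finset.sum_add_distrib, ← Finset.mul_sum] at this
    rw [g1, g2] at this
    exact mul_left_cancel₀ (pow_ne_zero 3 hq) (add_left_cancel this)
  ext k
  fin_cases k
  · simpa [gam] using g1
  · simpa [gam] using g2
  · simpa [gam] using g3

/-- Affine invariance of the Vinogradov system: a set lying in the image of `T` under
`m ↦ c + q m` has at most as many solutions as `T`. -/
lemma J_affine {S T : Finset ℤ} {c q : ℤ} (hq : q ≠ 0)
    (h : ∀ n ∈ S, ∃ m ∈ T, n = c + q * m) : J S ≤ J T := by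
  rw [J_eq_card, J_eq_card]
  have h' : ∀ n ∈ S, (n - c) / q ∈ T ∧ n = c + q * ((n - c) / q) := by
    intro n hn
    obtain ⟨m, hm, rfl⟩ := h n hn
    rw [add_sub_cancel_left, Int.mul_ediv_cancel_left _ hq]
    exact ⟨hm, rfl⟩
  norm_cast
  refine Finset.card_le_card_of_injOn
    (fun p => (fun i => (p.1 i - c) / q, fun i => (p.2 i - c) / q)) ?_ ?_
  · rintro ⟨a, b⟩ hp
    simp only [sols, Finset.coe_filter, Finset.mem_product, Fintype.mem_piFinset,
      Set.mem_ofPred_eq] at hp ⊢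
    obtain ⟨⟨ha, hb⟩, he⟩ := hp
    refine ⟨⟨fun i => (h' _ (ha i)).1, fun i => (h' _ (hb i)).1⟩, ?_⟩
    refine gam_affine (c := c) hq _ _ ?_
    simp only [← (h' _ (ha _)).2, ← (h' _ (hb _)).2]
    exact he
  · rintro ⟨a, b⟩ hp ⟨a', b'⟩ hp' heq
    simp only [sols, Finset.coe_filter, Finset.mem_product, Fintype.mem_piFinset,
      Set.mem_ofPred_eq] at hp hp'
    simp only [Prod.mk.injEq] at heq ⊢
    constructor
    · ext i
      rw [(h' _ (hp.1.1 i)).2, (h' _ (hp'.1.1 i)).2, congrFun heq.1 i]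
    · ext i
      rw [(h' _ (hp.1.2 i)).2, (h' _ (hp'.1.2 i)).2, congrFun heq.2 i]

/-- The members of `S` congruent to `η` modulo `q`. -/
def cls (S : Finset ℤ) (q η : ℤ) : Finset ℤ := S.filter fun n => q ∣ n - η

lemma mem_cls {S : Finset ℤ} {q η n : ℤ} : n ∈ cls S q η ↔ n ∈ S ∧ q ∣ n - η := by
  simp [cls]

/-- The members of a residue class modulo `q` in `[1, X]` form a progression of length at most
`X / q + 1`. -/
lemma J_cls (X q : ℕ) (hq : 0 < q) (η : ℤ) :
    J (cls (Finset.Icc 1 (X : ℤ)) q η) ≤ J (Finset.Icc 1 ((X / q + 1 : ℕ) : ℤ)) := by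
  have hq' : (0 : ℤ) < q := by exact_mod_cast hq
  refine J_affine (c := 1 + (η - 1) % q - q) hq'.ne' fun n hn => ?_
  rw [mem_cls, Finset.mem_Icc] at hn
  obtain ⟨⟨h1, h2⟩, h3⟩ := hn
  refine ⟨(n - 1) / q + 1, ?_, ?_⟩
  · rw [Finset.mem_Icc]
    constructor
    · have := Int.ediv_nonneg (a := n - 1) (b := q) (by omega) hq'.le
      omega
    · have : (n - 1) / q ≤ (X : ℤ) / q := Int.ediv_le_ediv hq' (by omega)
      push_cast; omega
  · have hm : (n - 1) % q = (η - 1) % q := by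
      exact (Int.ModEq.symm (Int.modEq_iff_dvd.2 (by simpa using h3)) : n - 1 ≡ η - 1 [ZMOD q])
    have := Int.mul_ediv_add_emod (n - 1) q
    rw [hm] at this
    linarith

/-- Splitting a residue class modulo `q` into residue classes modulo `q m`. -/
lemma esum_cls (S : Finset ℤ) (q m : ℕ) (hq : 0 < q) (hm : 0 < m) (ξ : ℤ) (x : E3) :
    esum (cls S q ξ) x =
      ∑ y ∈ Finset.range m, esum (cls S ((q * m : ℕ) : ℤ) (ξ + q * (y : ℤ))) x := by
  have hq' : (0 : ℤ) < q := by exact_mod_cast hq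
  have hm' : (0 : ℤ) < m := by exact_mod_cast hm
  have key : ∀ n ∈ cls S q ξ, (((n - ξ) / q) % m).toNat ∈ Finset.range m := by
    intro n _
    rw [Finset.mem_range]
    have h1 := Int.emod_lt_of_pos ((n - ξ) / q) hm'
    have h2 := Int.emod_nonneg ((n - ξ) / q) hm'.ne'
    omega
  rw [esum, ← Finset.sum_fiberwise_of_maps_to key]
  refine Finset.sum_congr rfl fun y hy => ?_
  rw [esum]
  refine Finset.sum_congr ?_ fun _ _ => rfl
  ext n
  rw [Finset.mem_filter, mem_cls, mem_cls, and_assoc]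
  refine and_congr_right fun _ => ?_
  rw [Finset.mem_range] at hy
  constructor
  · rintro ⟨⟨k, hk⟩, h2⟩
    rw [hk, Int.mul_ediv_cancel_left _ hq'.ne'] at h2
    have h3 : k % m = y := by
      have := Int.emod_nonneg k hm'.ne'
      omega
    have h4 := Int.mul_ediv_add_emod k m
    refine ⟨k / m, ?_⟩
    rw [h3] at h4
    push_cast
    have : n - (ξ + q * y) = q * k - q * y := by rw [← hk]; ring
    rw [this]; linear_combination -(q : ℤ) * h4
  · rintro ⟨k, hk⟩
    push_cast at hk
    have h1 : n - ξ = q * (y + m * k) := by linear_combination hk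
    refine ⟨⟨_, h1⟩, ?_⟩
    rw [h1, Int.mul_ediv_cancel_left _ hq'.ne', Int.add_mul_emod_self_left,
      Int.emod_eq_of_lt (by positivity) (by exact_mod_cast hy)]
    simp

/-! ### The linear congruence step -/

lemma dvd_cong {a x y : ℤ} (h : a ∣ x) (e : x = y) : a ∣ y := e ▸ h

/-- The frequencies `v ∈ ℤ³` whose coordinates, after translating the moment curve by `-η`, are
divisible by `q`, `q²` and `q³`. Differences of points of the curve with parameters congruent
to `η` modulo `q` lie in this subgroup. -/
def freqLattice (η q : ℤ) : AddSubgroup (Fin 3 → ℤ) where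
  carrier := {v | q ∣ v 0 ∧ q ^ 2 ∣ v 1 - 2 * η * v 0 ∧
    q ^ 3 ∣ v 2 - 3 * η * v 1 + 3 * η ^ 2 * v 0}
  zero_mem' := by simp
  add_mem' := by
    rintro v w ⟨h1, h2, h3⟩ ⟨k1, k2, k3⟩
    refine ⟨dvd_add h1 k1, ?_, ?_⟩
    · exact dvd_cong (dvd_add h2 k2) (by simp only [Pi.add_apply]; ring)
    · exact dvd_cong (dvd_add h3 k3) (by simp only [Pi.add_apply]; ring)
  neg_mem' := by
    rintro v ⟨h1, h2, h3⟩
    refine ⟨by simpa using h1, ?_, ?_⟩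
    · exact dvd_cong ((dvd_neg.2 h2)) (by simp only [Pi.neg_apply]; ring)
    · exact dvd_cong ((dvd_neg.2 h3)) (by simp only [Pi.neg_apply]; ring)

lemma mem_freqLattice {η q : ℤ} {v : Fin 3 → ℤ} : v ∈ freqLattice η q ↔
    q ∣ v 0 ∧ q ^ 2 ∣ v 1 - 2 * η * v 0 ∧ q ^ 3 ∣ v 2 - 3 * η * v 1 + 3 * η ^ 2 * v 0 :=
  Iff.rfl

lemma gam_sub_mem {η q n m : ℤ} (hn : q ∣ n - η) (hm : q ∣ m - η) :
    gam n - gam m ∈ freqLattice η q := by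
  rw [mem_freqLattice]
  simp only [gam, Pi.sub_apply, Matrix.cons_val]
  refine ⟨?_, ?_, ?_⟩
  · exact dvd_cong (dvd_sub hn hm) (by ring)
  · exact dvd_cong (dvd_sub (pow_dvd_pow_of_dvd hn 2) (pow_dvd_pow_of_dvd hm 2)) (by ring)
  · exact dvd_cong (dvd_sub (pow_dvd_pow_of_dvd hn 3) (pow_dvd_pow_of_dvd hm 3)) (by ring)

lemma spec_cls (S : Finset ℤ) (q η : ℤ) (k : ℕ) :
    Spec (freqLattice η q : Set (Fin 3 → ℤ))
      (fun x => ((‖esum (cls S q η) x‖ ^ (2 * k) : ℝ) : ℂ)) :=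
  spec_pow _ _ (fun _ hn _ hm => gam_sub_mem (mem_cls.1 hn).2 (mem_cls.1 hm).2) k

lemma dvd_of_dvd_mul_unit {p k : ℕ} (hp : p.Prime) {u v : ℤ} (hu : ¬ (p : ℤ) ∣ u)
    (h : (p : ℤ) ^ k ∣ v * u) : (p : ℤ) ^ k ∣ v := by
  have hp' := Nat.prime_iff_prime_int.1 hp
  have : IsCoprime ((p : ℤ) ^ k) u :=
    IsCoprime.pow_left (hp'.irreducible.coprime_iff_not_dvd.2 hu)
  exact this.dvd_of_dvd_mul_right h

lemma not_dvd_natCast {p k : ℕ} (hk : 0 < k) (hkp : k < p) : ¬ (p : ℤ) ∣ (k : ℤ) := by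
  intro h
  have := Nat.le_of_dvd hk (Int.natCast_dvd_natCast.1 h)
  omega

/-- Two parameters in a common class `ξ ≢ η (mod p)` whose points differ by an element of
`freqLattice η (p ^ b)` agree modulo `p ^ (3 b)`. -/
lemma diff_dvd {p b : ℕ} (hp : p.Prime) (h5 : 5 ≤ p) {ξ η n m : ℤ} (hξ : ¬ (p : ℤ) ∣ ξ - η)
    (hn : (p : ℤ) ∣ n - ξ) (hm : (p : ℤ) ∣ m - ξ)
    (h : gam n - gam m ∈ freqLattice η ((p : ℤ) ^ b)) : (p : ℤ) ^ (3 * b) ∣ n - m := by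
  rw [mem_freqLattice] at h
  simp only [gam, Pi.sub_apply, Matrix.cons_val] at h
  refine dvd_of_dvd_mul_unit hp (u := (n - η) ^ 2 + (n - η) * (m - η) + (m - η) ^ 2) ?_ ?_
  · intro hd
    have hp' := Nat.prime_iff_prime_int.1 hp
    have h1 : (p : ℤ) ∣ 3 * (ξ - η) ^ 2 := by
      obtain ⟨k, hk⟩ := hn
      obtain ⟨l, hl⟩ := hm
      obtain ⟨r, hr⟩ := hd
      obtain rfl : n = ξ + p * k := by linarith
      obtain rfl : m = ξ + p * l := by linarith
      exact ⟨r - 3 * (ξ - η) * (k + l) - p * (k ^ 2 + k * l + l ^ 2),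
        by linear_combination hr⟩
    rcases hp'.dvd_or_dvd h1 with h2 | h2
    · exact not_dvd_natCast (p := p) (k := 3) (by norm_num) (by omega) (by exact_mod_cast h2)
    · exact hξ (hp'.dvd_of_dvd_pow h2)
  · rw [mul_comm 3 b, pow_mul]
    exact dvd_cong (h.2.2) (by ring)

open scoped Pointwise in
/-- The linear congruence step: the pair of variables in the class of `ξ` may be refined from
modulus `p ^ a` to modulus `p ^ (3 b)`. -/
lemma refine_two {p a b : ℕ} (hp : p.Prime) (h5 : 5 ≤ p) (ha : 1 ≤ a) (hab : a ≤ 3 * b)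
    (S : Finset ℤ) {ξ η : ℤ} (hξ : ¬ (p : ℤ) ∣ ξ - η) {M : ℝ} (hM0 : 0 ≤ M)
    (hM : ∀ ξ' : ℤ, ¬ (p : ℤ) ∣ ξ' - η →
      mom (cls S ((p : ℤ) ^ (3 * b)) ξ') (cls S ((p : ℤ) ^ b) η) 2 10 ≤ M) :
    mom (cls S ((p : ℤ) ^ a) ξ) (cls S ((p : ℤ) ^ b) η) 2 10 ≤ (p : ℝ) ^ (3 * b - a) * M := by
  obtain ⟨c, hc⟩ := Nat.exists_eq_add_of_le hab
  rw [hc, Nat.add_sub_cancel_left]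
  have hpp : 0 < p := hp.pos
  set W : E3 → ℝ := fun x => ‖esum (cls S ((p : ℤ) ^ b) η) x‖ ^ 10 with hW
  set h : ℕ → E3 → ℂ := fun y => esum (cls S ((p : ℤ) ^ (a + c)) (ξ + (p : ℤ) ^ a * (y : ℤ)))
    with hh
  have hcont : ∀ y, Continuous (h y) := fun y => continuous_esum _
  have hWc : Continuous W := (continuous_esum _).norm.pow _
  have hunit : ∀ y : ℕ, ¬ (p : ℤ) ∣ (ξ + (p : ℤ) ^ a * (y : ℤ)) - η := by
    intro y hd
    apply hξ
    have h2 : (p : ℤ) ∣ (p : ℤ) ^ a * y := Dvd.dvd.mul_right (dvd_pow_self _ (by omega)) _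
    exact dvd_cong (dvd_sub hd h2) (by ring)
  have hmain := sum_sq_le (Finset.range (p ^ c)) h hcont W hWc (fun x => by positivity)
    ((Finset.range (p ^ c)).image fun y => (y, y)) M hM0 ?_ ?_
  · have e1 : mom (cls S ((p : ℤ) ^ a) ξ) (cls S ((p : ℤ) ^ b) η) 2 10 =
        ∫ x, ‖∑ i ∈ Finset.range (p ^ c), h i x‖ ^ 2 * W x ∂cubeMeas := by
      unfold mom
      congr 1; ext x
      have := esum_cls S (p ^ a) (p ^ c) (pow_pos hpp _) (pow_pos hpp _) ξ x
      rw [← pow_add] at this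
      push_cast at this
      rw [this]
    rw [e1]
    refine hmain.trans (mul_le_mul_of_nonneg_right ?_ hM0)
    have : (((Finset.range (p ^ c)).image fun y => (y, y)).card : ℝ) ≤ ((p ^ c : ℕ) : ℝ) := by
      have := Finset.card_image_le (s := Finset.range (p ^ c)) (f := fun y => (y, y))
      rw [Finset.card_range] at this
      exact_mod_cast this
    exact_mod_cast this
  · intro i hi j hj hij
    have hs := ((spec_esum (cls S ((p : ℤ) ^ (a + c)) (ξ + (p : ℤ) ^ a * (i : ℤ)))).mul
      (spec_star_esum (cls S ((p : ℤ) ^ (a + c)) (ξ + (p : ℤ) ^ a * (j : ℤ))))).mul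
      (spec_cls S ((p : ℤ) ^ b) η 5)
    refine hs.integral_eq_zero ?_
    rintro ⟨_, ⟨_, ⟨n, hn, rfl⟩, _, ⟨m, hm, rfl⟩, rfl⟩, l, hl, h0⟩
    have hl' : gam n - gam m ∈ freqLattice η ((p : ℤ) ^ b) := by
      have h1 : gam n - gam m = -l := by
        rw [sub_eq_add_neg]; exact eq_neg_of_add_eq_zero_left h0
      rw [h1]; exact neg_mem hl
    have hn' := (mem_cls.1 (Finset.mem_coe.1 hn)).2
    have hm' := (mem_cls.1 (Finset.mem_coe.1 hm)).2
    have hdv : ∀ {n : ℤ} {i : ℕ}, (p : ℤ) ^ (a + c) ∣ n - (ξ + (p : ℤ) ^ a * (i : ℤ)) →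
        (p : ℤ) ∣ n - ξ := by
      intro n i hn
      have h2 : (p : ℤ) ∣ (p : ℤ) ^ a * i := Dvd.dvd.mul_right (dvd_pow_self _ (by omega)) _
      have h3 : (p : ℤ) ∣ (p : ℤ) ^ (a + c) := dvd_pow_self _ (by omega)
      exact dvd_cong (dvd_add (h3.trans hn) h2) (by ring)
    have hd := diff_dvd hp h5 hξ (hdv hn') (hdv hm') hl'
    rw [hc] at hd
    have h4 : (p : ℤ) ^ (a + c) ∣ (p : ℤ) ^ a * ((i : ℤ) - j) := by
      exact dvd_cong (dvd_sub (dvd_add hd hm') hn') (by ring)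
    rw [pow_add] at h4
    have h5 := Int.dvd_of_mul_dvd_mul_left (pow_ne_zero a (by exact_mod_cast hpp.ne')) h4
    have h6 : i ≡ j [MOD p ^ c] := by
      rw [Nat.modEq_iff_dvd, dvd_sub_comm]; exact_mod_cast h5
    have h7 : i = j := Nat.ModEq.eq_of_lt_of_lt h6 (Finset.mem_range.1 hi) (Finset.mem_range.1 hj)
    subst h7
    exact hij (Finset.mem_image.2 ⟨i, hi, rfl⟩)
  · intro i hi j hj
    have hb : ∀ y, ∫ x, ‖h y x‖ ^ 2 * W x ∂cubeMeas ≤ M := by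
      intro y
      have := hM _ (hunit y)
      rw [hc] at this
      exact this
    have hint : ∀ y, Integrable (fun x => ‖h y x‖ ^ 2 * W x) cubeMeas := fun y =>
      integrable_of_cont (((hcont y).norm.pow _).mul hWc)
    calc ∫ x, ‖h i x‖ * ‖h j x‖ * W x ∂cubeMeas
        ≤ ∫ x, (1 / 2) * (‖h i x‖ ^ 2 * W x + ‖h j x‖ ^ 2 * W x) ∂cubeMeas := by
          refine integral_mono
            (integrable_of_cont (((hcont i).norm.mul (hcont j).norm).mul hWc))
            (((hint i).add (hint j)).const_mul _) fun x => ?_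
          have h1 : ‖h i x‖ * ‖h j x‖ ≤ (1 / 2) * (‖h i x‖ ^ 2 + ‖h j x‖ ^ 2) := by
            nlinarith [sq_nonneg (‖h i x‖ - ‖h j x‖)]
          have := mul_le_mul_of_nonneg_right h1 (show 0 ≤ W x by positivity)
          dsimp only
          linarith
      _ ≤ M := by
          rw [integral_const_mul, integral_add (hint i) (hint j)]
          linarith [hb i, hb j]

/-! ### The quadratic congruence step -/

/-- The multiples of `d` below `d k` number at most `k`. -/
lemma card_multiples_le (d k : ℕ) : ((Finset.range (d * k)).filter (d ∣ ·)).card ≤ k := by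
  have : (Finset.range (d * k)).filter (d ∣ ·) ⊆ (Finset.range k).image (d * ·) := by
    intro n hn
    rw [Finset.mem_filter, Finset.mem_range] at hn
    obtain ⟨hn, m, rfl⟩ := hn
    rw [Finset.mem_image]
    exact ⟨m, Finset.mem_range.2 (lt_of_mul_lt_mul_left' hn), rfl⟩
  refine (Finset.card_le_card this).trans (Finset.card_image_le.trans ?_)
  rw [Finset.card_range]

/-- The number of pairs of residues modulo `p ^ c` with product zero. -/
lemma card_mul_zero_le {p : ℕ} (hp : p.Prime) (c : ℕ) :
    ((Finset.range (p ^ c) ×ˢ Finset.range (p ^ c)).filter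
      fun u => p ^ c ∣ u.1 * u.2).card ≤ (c + 1) * p ^ c := by
  have hsub : (Finset.range (p ^ c) ×ˢ Finset.range (p ^ c)).filter
      (fun u => p ^ c ∣ u.1 * u.2) ⊆ (Finset.range (c + 1)).biUnion fun i =>
      ((Finset.range (p ^ c)).filter (p ^ i ∣ ·)) ×ˢ
        ((Finset.range (p ^ c)).filter (p ^ (c - i) ∣ ·)) := by
    rintro ⟨u, v⟩ h
    rw [Finset.mem_filter, Finset.mem_product] at h
    obtain ⟨⟨hu, hv⟩, hd⟩ := h
    obtain ⟨k₁, k₂, h1, h2, h3⟩ := (Nat.dvd_mul).1 hd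
    obtain ⟨i, hi, rfl⟩ := (Nat.dvd_prime_pow hp).1 (Dvd.intro _ h3)
    have h4 : k₂ = p ^ (c - i) := by
      have : p ^ i * p ^ (c - i) = p ^ c := by rw [← pow_add]; congr 1; omega
      exact Nat.eq_of_mul_eq_mul_left (pow_pos hp.pos i) (h3.trans this.symm)
    subst h4
    rw [Finset.mem_biUnion]
    refine ⟨i, Finset.mem_range.2 (by omega), ?_⟩
    rw [Finset.mem_product, Finset.mem_filter, Finset.mem_filter]
    exact ⟨⟨hu, h1⟩, hv, h2⟩
  refine (Finset.card_le_card hsub).trans (Finset.card_biUnion_le.trans ?_)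
  refine (Finset.sum_le_card_nsmul _ _ (p ^ c) fun i hi => ?_).trans ?_
  · rw [Finset.mem_range] at hi
    have e1 : p ^ c = p ^ i * p ^ (c - i) := by rw [← pow_add]; congr 1; omega
    have e2 : p ^ c = p ^ (c - i) * p ^ i := by rw [e1, mul_comm]
    rw [Finset.card_product]
    have h1 := card_multiples_le (p ^ i) (p ^ (c - i))
    have h2 := card_multiples_le (p ^ (c - i)) (p ^ i)
    rw [← e1] at h1
    rw [← e2] at h2
    calc _ ≤ p ^ (c - i) * p ^ i := Nat.mul_le_mul h1 h2
      _ = p ^ c := e2.symm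
  · rw [Finset.card_range, smul_eq_mul]

/-- The key factorisation for the quadratic and cubic congruences
`n₁² + n₂² ≡ n₃² + n₄²`, `n₁³ + n₂³ ≡ n₃³ + n₄³` when the `nᵢ` are congruent units modulo `p`. -/
lemma factor_dvd {p k : ℕ} (hp : p.Prime) (h5 : 5 ≤ p) {n₁ n₂ n₃ n₄ : ℤ}
    (hu : ¬ (p : ℤ) ∣ n₁) (h₂ : (p : ℤ) ∣ n₂ - n₁) (h₃ : (p : ℤ) ∣ n₃ - n₁)
    (h₄ : (p : ℤ) ∣ n₄ - n₁)
    (hsq : (p : ℤ) ^ k ∣ n₁ ^ 2 + n₂ ^ 2 - n₃ ^ 2 - n₄ ^ 2)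
    (hcu : (p : ℤ) ^ k ∣ n₁ ^ 3 + n₂ ^ 3 - n₃ ^ 3 - n₄ ^ 3) :
    (p : ℤ) ^ k ∣ (n₁ - n₃) * (n₁ + n₃ - n₂ - n₄) := by
  -- With `s = n₁ + n₃`, `t = n₂ + n₄`, `d = n₁ - n₃`, the cofactor is congruent to `48 n₁⁴`.
  refine dvd_of_dvd_mul_unit hp (u := 3 * (n₁ + n₃) * (n₂ + n₄) ^ 3 -
    (n₁ - n₃) ^ 2 * ((n₁ + n₃) ^ 2 + (n₁ + n₃) * (n₂ + n₄) + (n₂ + n₄) ^ 2)) ?_ ?_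
  · intro hd
    have hp' := Nat.prime_iff_prime_int.1 hp
    obtain ⟨a, ha⟩ := h₂
    obtain ⟨b, hb⟩ := h₃
    obtain ⟨c, hc⟩ := h₄
    obtain rfl : n₂ = n₁ + p * a := by linarith
    obtain rfl : n₃ = n₁ + p * b := by linarith
    obtain rfl : n₄ = n₁ + p * c := by linarith
    have h48 : (p : ℤ) ∣ 48 * n₁ ^ 4 := by
      rw [← ZMod.intCast_zmod_eq_zero_iff_dvd (b := p)] at hd ⊢
      push_cast at hd ⊢
      simp only [ZMod.natCast_self, zero_mul, add_zero] at hd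
      linear_combination hd
    rcases hp'.dvd_or_dvd h48 with h | h
    · have h' : p ∣ 2 ^ 4 * 3 := by exact_mod_cast h
      rcases hp.dvd_mul.1 h' with h1 | h1
      · have := Nat.le_of_dvd (by norm_num) (hp.dvd_of_dvd_pow h1); omega
      · have := Nat.le_of_dvd (by norm_num) h1; omega
    · exact hu (hp'.dvd_of_dvd_pow h)
  · set s := n₁ + n₃
    set t := n₂ + n₄
    set d := n₁ - n₃
    set d' := n₄ - n₂
    refine dvd_cong (dvd_sub (Dvd.dvd.mul_left hcu (4 * t ^ 3)) (Dvd.dvd.mul_left hsq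
      (3 * t ^ 4 + ((d * s) ^ 2 + d * s * (d' * t) + (d' * t) ^ 2)))) ?_
    simp only [s, t, d, d']; ring

/-- `Good P m k r y` : the classes `r + P yᵢ` modulo `m` contain a solution of the quadratic and
cubic congruences modulo `k`. -/
def Good (P m k r : ℤ) (y : (ℕ × ℕ) × (ℕ × ℕ)) : Prop :=
  ∃ n₁ n₂ n₃ n₄ : ℤ, m ∣ n₁ - (r + P * y.1.1) ∧ m ∣ n₂ - (r + P * y.1.2) ∧
    m ∣ n₃ - (r + P * y.2.1) ∧ m ∣ n₄ - (r + P * y.2.2) ∧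
    k ∣ n₁ ^ 2 + n₂ ^ 2 - n₃ ^ 2 - n₄ ^ 2 ∧ k ∣ n₁ ^ 3 + n₂ ^ 3 - n₃ ^ 3 - n₄ ^ 3

lemma emod_toNat_mem (z : ℤ) (n : ℕ) (hn : 0 < n) : (z % n).toNat ∈ Finset.range n := by
  have h1 := Int.emod_lt_of_pos z (show (0 : ℤ) < n by exact_mod_cast hn)
  have h2 := Int.emod_nonneg z (show (n : ℤ) ≠ 0 by exact_mod_cast hn.ne')
  rw [Finset.mem_range]; omega

lemma emod_toNat_cast (z : ℤ) (n : ℕ) (hn : 0 < n) : (((z % n).toNat : ℕ) : ℤ) = z % n :=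
  Int.toNat_of_nonneg (Int.emod_nonneg z (by exact_mod_cast hn.ne'))

open Classical in
/-- There are at most `(c + 1) p ^ (2 c)` quadruples of classes, `c = 2 e`, solving the quadratic
and cubic congruences modulo `p ^ (2 (a + e))`. The quadruple is determined by `y₁`, `y₁ - y₃` and
`y₁ + y₃ - y₂ - y₄`, and the last two have product zero. -/
lemma card_good_le {p a e : ℕ} (hp : p.Prime) (h5 : 5 ≤ p) (ha : 1 ≤ a) {r : ℤ}
    (hr : ¬ (p : ℤ) ∣ r) :
    (((Finset.range (p ^ (2 * e)) ×ˢ Finset.range (p ^ (2 * e))) ×ˢ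
      (Finset.range (p ^ (2 * e)) ×ˢ Finset.range (p ^ (2 * e)))).filter
      (Good ((p : ℤ) ^ a) ((p : ℤ) ^ (a + 2 * e)) ((p : ℤ) ^ (2 * (a + e))) r)).card ≤
      p ^ (2 * e) * ((2 * e + 1) * p ^ (2 * e)) := by
  set c := 2 * e with hc
  have hQ : 0 < p ^ c := pow_pos hp.pos c
  have hpa : (p : ℤ) ^ a ≠ 0 := pow_ne_zero a (by exact_mod_cast hp.ne_zero)
  have hdvdp : (p : ℤ) ∣ (p : ℤ) ^ a := dvd_pow_self _ (by omega)
  have hdvdm : (p : ℤ) ∣ (p : ℤ) ^ (a + c) := dvd_pow_self _ (by omega)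
  have hmk : (p : ℤ) ^ (a + c) ∣ (p : ℤ) ^ (2 * (a + e)) := pow_dvd_pow _ (by omega)
  have hcast : ((p ^ c : ℕ) : ℤ) = (p : ℤ) ^ c := by push_cast; ring
  calc _ ≤ (Finset.range (p ^ c) ×ˢ ((Finset.range (p ^ c) ×ˢ Finset.range (p ^ c)).filter
      fun u => p ^ c ∣ u.1 * u.2)).card := ?_
    _ ≤ _ := by
      rw [Finset.card_product, Finset.card_range]
      exact Nat.mul_le_mul_left _ (card_mul_zero_le hp c)
  refine Finset.card_le_card_of_injOn (fun y => (y.1.1,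
    (((y.1.1 : ℤ) - y.2.1) % (p ^ c : ℕ)).toNat,
    (((y.1.1 : ℤ) + y.2.1 - y.1.2 - y.2.2) % (p ^ c : ℕ)).toNat)) ?_ ?_
  · rintro ⟨⟨y₁, y₂⟩, ⟨y₃, y₄⟩⟩ hy
    simp only [Finset.coe_filter, Finset.mem_product, Set.mem_ofPred_eq] at hy
    obtain ⟨⟨⟨hy₁, hy₂⟩, hy₃, hy₄⟩, n₁, n₂, n₃, n₄, h₁, h₂, h₃, h₄, hsq, hcu⟩ := hy
    dsimp only at h₁ h₂ h₃ h₄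
    have hx : ∀ {n : ℤ} {y : ℕ}, (p : ℤ) ^ (a + c) ∣ n - (r + (p : ℤ) ^ a * y) →
        (p : ℤ) ∣ n - r := fun {n y} h =>
      dvd_cong (dvd_add (hdvdm.trans h) (hdvdp.mul_right (y : ℤ))) (by ring)
    have hf := factor_dvd hp h5 (n₁ := n₁) (n₂ := n₂) (n₃ := n₃) (n₄ := n₄)
      (fun h => hr (dvd_cong (dvd_sub h (hx h₁)) (by ring)))
      (dvd_cong (dvd_sub (hx h₂) (hx h₁)) (by ring))
      (dvd_cong (dvd_sub (hx h₃) (hx h₁)) (by ring))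
      (dvd_cong (dvd_sub (hx h₄) (hx h₁)) (by ring)) hsq hcu
    obtain ⟨k₁, hk₁⟩ := h₁
    obtain ⟨k₂, hk₂⟩ := h₂
    obtain ⟨k₃, hk₃⟩ := h₃
    obtain ⟨k₄, hk₄⟩ := h₄
    have e1 : n₁ - n₃ = (p : ℤ) ^ a * (((y₁ : ℤ) - y₃) + (p : ℤ) ^ c * (k₁ - k₃)) := by
      rw [pow_add] at hk₁ hk₃; linear_combination hk₁ - hk₃
    have e2 : n₁ + n₃ - n₂ - n₄ = (p : ℤ) ^ a * (((y₁ : ℤ) + y₃ - y₂ - y₄) +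
        (p : ℤ) ^ c * (k₁ + k₃ - k₂ - k₄)) := by
      rw [pow_add] at hk₁ hk₂ hk₃ hk₄; linear_combination hk₁ + hk₃ - hk₂ - hk₄
    have e3 : (p : ℤ) ^ c ∣ ((y₁ : ℤ) - y₃) * ((y₁ : ℤ) + y₃ - y₂ - y₄) := by
      rw [e1, e2] at hf
      have h6 : (p : ℤ) ^ (2 * (a + e)) = ((p : ℤ) ^ a * (p : ℤ) ^ a) * (p : ℤ) ^ c := by
        rw [← pow_add, ← pow_add]; congr 1; omega
      have h7 : ((p : ℤ) ^ a * (p : ℤ) ^ a) * (p : ℤ) ^ c ∣ ((p : ℤ) ^ a * (p : ℤ) ^ a) *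
          ((((y₁ : ℤ) - y₃) + (p : ℤ) ^ c * (k₁ - k₃)) *
          (((y₁ : ℤ) + y₃ - y₂ - y₄) + (p : ℤ) ^ c * (k₁ + k₃ - k₂ - k₄))) := by
        rw [← h6]; exact dvd_cong hf (by ring)
      have h8 := Int.dvd_of_mul_dvd_mul_left (mul_ne_zero hpa hpa) h7
      refine dvd_cong (dvd_sub h8 (Dvd.intro ((k₁ - k₃) * ((y₁ : ℤ) + y₃ - y₂ - y₄) +
        ((y₁ : ℤ) - y₃) * (k₁ + k₃ - k₂ - k₄) +
        (p : ℤ) ^ c * (k₁ - k₃) * (k₁ + k₃ - k₂ - k₄)) rfl)) (by ring)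
    simp only [Finset.coe_product, Set.mem_prod, Finset.mem_coe, Finset.coe_filter,
      Finset.mem_product, Set.mem_ofPred_eq]
    refine ⟨hy₁, ⟨emod_toNat_mem _ _ hQ, emod_toNat_mem _ _ hQ⟩, ?_⟩
    rw [← Int.natCast_dvd_natCast, Nat.cast_mul, emod_toNat_cast _ _ hQ, emod_toNat_cast _ _ hQ]
    rw [Int.dvd_iff_emod_eq_zero, ← Int.mul_emod, ← Int.dvd_iff_emod_eq_zero, hcast]
    exact e3
  · rintro ⟨⟨y₁, y₂⟩, ⟨y₃, y₄⟩⟩ hy ⟨⟨z₁, z₂⟩, ⟨z₃, z₄⟩⟩ hz heq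
    simp only [Finset.coe_filter, Finset.mem_product, Set.mem_ofPred_eq, Finset.mem_range] at hy hz
    obtain ⟨⟨⟨hy₁, hy₂⟩, hy₃, hy₄⟩, n₁, n₂, n₃, n₄, h₁, h₂, h₃, h₄, hsq, -⟩ := hy
    obtain ⟨⟨⟨hz₁, hz₂⟩, hz₃, hz₄⟩, m₁, m₂, m₃, m₄, g₁, g₂, g₃, g₄, gsq, -⟩ := hz
    dsimp only at h₁ h₂ h₃ h₄ g₁ g₂ g₃ g₄
    simp only [Prod.mk.injEq] at heq
    obtain ⟨rfl, heq2, heq3⟩ := heq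
    have hmod : ∀ {u v : ℤ}, (u % (p ^ c : ℕ)).toNat = (v % (p ^ c : ℕ)).toNat →
        (p : ℤ) ^ c ∣ u - v := by
      intro u v h
      have h' : u % (p ^ c : ℕ) = v % (p ^ c : ℕ) := by
        rw [← emod_toNat_cast u _ hQ, ← emod_toNat_cast v _ hQ, h]
      rw [← hcast]
      exact Int.ModEq.dvd (Int.ModEq.symm h')
    have hbig : ∀ {u : ℤ}, (p : ℤ) ^ c ∣ u → (p : ℤ) ^ (a + c) ∣ (p : ℤ) ^ a * u := by
      intro u h; rw [pow_add]; exact mul_dvd_mul_left _ h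
    have hsmall : ∀ {u v : ℕ}, u < p ^ c → v < p ^ c →
        (p : ℤ) ^ (a + c) ∣ (p : ℤ) ^ a * ((u : ℤ) - v) → u = v := by
      intro u v hu hv h
      rw [pow_add] at h
      have h5 := Int.dvd_of_mul_dvd_mul_left hpa h
      refine Nat.ModEq.eq_of_lt_of_lt (m := p ^ c) ?_ hu hv
      rw [Nat.modEq_iff_dvd, dvd_sub_comm]; exact_mod_cast h5
    have d2 := hmod heq2
    have d3 := hmod heq3
    have hy3 : y₃ = z₃ := hsmall hy₃ hz₃ (hbig (dvd_cong (dvd_neg.2 d2) (by ring)))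
    subst hy3
    have a1 := dvd_sub h₁ g₁
    have a3 := dvd_sub h₃ g₃
    have a24 := dvd_sub (dvd_sub (dvd_add h₂ h₄) (dvd_add g₂ g₄)) (hbig d3)
    have b24 : (p : ℤ) ^ (a + c) ∣ (n₂ + n₄) - (m₂ + m₄) := dvd_cong a24 (by ring)
    have b1 : (p : ℤ) ^ (a + c) ∣ n₁ - m₁ := dvd_cong a1 (by ring)
    have b3 : (p : ℤ) ^ (a + c) ∣ n₃ - m₃ := dvd_cong a3 (by ring)
    have hx : ∀ {n : ℤ} {y : ℕ}, (p : ℤ) ^ (a + c) ∣ n - (r + (p : ℤ) ^ a * y) →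
        (p : ℤ) ∣ n - r := fun {n y} h =>
      dvd_cong (dvd_add (hdvdm.trans h) (hdvdp.mul_right (y : ℤ))) (by ring)
    have hp' := Nat.prime_iff_prime_int.1 hp
    have n2 : ¬ (p : ℤ) ∣ 2 := fun h =>
      not_dvd_natCast (p := p) (k := 2) (by norm_num) (by omega) (by exact_mod_cast h)
    have hst : ¬ (p : ℤ) ∣ n₂ + n₄ := by
      intro h
      have h6 : (p : ℤ) ∣ 2 * r := dvd_cong (dvd_sub h (dvd_add (hx h₂) (hx h₄))) (by ring)
      rcases hp'.dvd_or_dvd h6 with h7 | h7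
      · exact n2 h7
      · exact hr h7
    have f1 : (p : ℤ) ^ (a + c) ∣ ((n₄ - n₂) - (m₄ - m₂)) * (n₂ + n₄) :=
      dvd_cong (dvd_add (dvd_sub (dvd_add (dvd_add
        (Dvd.dvd.mul_left b1 (n₁ + m₁)) (Dvd.dvd.mul_left b3 (-(n₃ + m₃))))
        (hmk.trans gsq)) (hmk.trans hsq)) (Dvd.dvd.mul_left b24 (-(m₄ - m₂)))) (by ring)
    have f2 := dvd_of_dvd_mul_unit hp hst f1
    have f4 : (p : ℤ) ^ (a + c) ∣ n₄ - m₄ :=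
      dvd_of_dvd_mul_unit hp n2 (dvd_cong (dvd_add f2 b24) (by ring))
    have f5 : (p : ℤ) ^ (a + c) ∣ n₂ - m₂ := dvd_cong (dvd_sub b24 f4) (by ring)
    have e4 : y₄ = z₄ := hsmall hy₄ hz₄
      (dvd_cong (dvd_sub (dvd_add f4 g₄) h₄) (by ring))
    have e2 : y₂ = z₂ := hsmall hy₂ hz₂
      (dvd_cong (dvd_sub (dvd_add f5 g₂) h₂) (by ring))
    rw [e2, e4]

open scoped Pointwise in
/-- The quadratic congruence step: the four variables in the class of `ξ` may be refined from
modulus `p ^ a` to modulus `p ^ (2 b - a)`, where `b = a + e`. -/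
lemma refine_four {p a e : ℕ} (hp : p.Prime) (h5 : 5 ≤ p) (ha : 1 ≤ a)
    (S : Finset ℤ) {ξ η : ℤ} (hξ : ¬ (p : ℤ) ∣ ξ - η) {M : ℝ} (hM0 : 0 ≤ M)
    (hM : ∀ ξ' : ℤ, ¬ (p : ℤ) ∣ ξ' - η →
      mom (cls S ((p : ℤ) ^ (a + 2 * e)) ξ') (cls S ((p : ℤ) ^ (a + e)) η) 4 8 ≤ M) :
    mom (cls S ((p : ℤ) ^ a) ξ) (cls S ((p : ℤ) ^ (a + e)) η) 4 8 ≤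
      (2 * e + 1) * (p : ℝ) ^ (4 * e) * M := by
  classical
  have hpp : 0 < p := hp.pos
  set b := a + e with hb
  set W : E3 → ℝ := fun x => ‖esum (cls S ((p : ℤ) ^ b) η) x‖ ^ 8 with hW
  set g : ℕ → E3 → ℂ :=
    fun y => esum (cls S ((p : ℤ) ^ (a + 2 * e)) (ξ + (p : ℤ) ^ a * (y : ℤ))) with hg
  set I := Finset.range (p ^ (2 * e)) ×ˢ Finset.range (p ^ (2 * e)) with hI
  have hcg : ∀ y, Continuous (g y) := fun y => continuous_esum _
  have hWc : Continuous W := (continuous_esum _).norm.pow _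
  have hunit : ∀ y : ℕ, ¬ (p : ℤ) ∣ (ξ + (p : ℤ) ^ a * (y : ℤ)) - η := by
    intro y hd
    apply hξ
    have h2 : (p : ℤ) ∣ (p : ℤ) ^ a * y := Dvd.dvd.mul_right (dvd_pow_self _ (by omega)) _
    exact dvd_cong (dvd_sub hd h2) (by ring)
  have hmain := sum_sq_le I (fun y x => g y.1 x * g y.2 x) (fun y => (hcg _).mul (hcg _)) W hWc
    (fun x => by positivity) ((I ×ˢ I).filter (Good ((p : ℤ) ^ a) ((p : ℤ) ^ (a + 2 * e))
      ((p : ℤ) ^ (2 * (a + e))) (ξ - η))) M hM0 ?_ ?_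
  · have e1 : mom (cls S ((p : ℤ) ^ a) ξ) (cls S ((p : ℤ) ^ b) η) 4 8 =
        ∫ x, ‖∑ i ∈ I, g i.1 x * g i.2 x‖ ^ 2 * W x ∂cubeMeas := by
      unfold mom
      congr 1; ext x
      have := esum_cls S (p ^ a) (p ^ (2 * e)) (pow_pos hpp _) (pow_pos hpp _) ξ x
      rw [← pow_add] at this
      push_cast at this
      have hprod : ∑ i ∈ I, g i.1 x * g i.2 x =
          (∑ y ∈ Finset.range (p ^ (2 * e)), g y x) * ∑ y ∈ Finset.range (p ^ (2 * e)), g y x := by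
        rw [Finset.sum_mul_sum, ← Finset.sum_product']
      rw [this, hprod, norm_mul]
      ring
    rw [e1]
    refine hmain.trans (mul_le_mul_of_nonneg_right ?_ hM0)
    have h1 := card_good_le (e := e) hp h5 ha hξ
    have h2 : (p : ℝ) ^ (4 * e) = (p : ℝ) ^ (2 * e) * (p : ℝ) ^ (2 * e) := by
      rw [← pow_add]; congr 1; omega
    calc _ ≤ ((p ^ (2 * e) * ((2 * e + 1) * p ^ (2 * e)) : ℕ) : ℝ) := by exact_mod_cast h1
      _ = _ := by rw [h2]; push_cast; ring
  · rintro ⟨y₁, y₂⟩ hy ⟨y₃, y₄⟩ hy' hbad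
    have hs := (((spec_esum (cls S ((p : ℤ) ^ (a + 2 * e)) (ξ + (p : ℤ) ^ a * (y₁ : ℤ)))).mul
      (spec_esum (cls S ((p : ℤ) ^ (a + 2 * e)) (ξ + (p : ℤ) ^ a * (y₂ : ℤ))))).mul
      ((spec_star_esum (cls S ((p : ℤ) ^ (a + 2 * e)) (ξ + (p : ℤ) ^ a * (y₃ : ℤ)))).mul
      (spec_star_esum (cls S ((p : ℤ) ^ (a + 2 * e)) (ξ + (p : ℤ) ^ a * (y₄ : ℤ)))))).mul
      (spec_cls S ((p : ℤ) ^ b) η 4)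
    have heq : ∀ x, (g y₁ x * g y₂ x) * star (g y₃ x * g y₄ x) * (W x : ℂ) =
        ((g y₁ * g y₂) * ((fun x => star (g y₃ x)) * fun x => star (g y₄ x)) *
          fun x => ((W x : ℝ) : ℂ)) x := by
      intro x
      simp only [Pi.mul_apply, star_mul']
    simp_rw [heq]
    refine hs.integral_eq_zero ?_
    rintro ⟨_, ⟨_, ⟨_, ⟨n₁, h₁, rfl⟩, _, ⟨n₂, h₂, rfl⟩, rfl⟩,
      _, ⟨_, ⟨n₃, h₃, rfl⟩, _, ⟨n₄, h₄, rfl⟩, rfl⟩, rfl⟩, l, hl, h0⟩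
    have hl' : gam n₁ + gam n₂ - gam n₃ - gam n₄ ∈ freqLattice η ((p : ℤ) ^ b) := by
      have h1 : gam n₁ + gam n₂ - gam n₃ - gam n₄ = -l := by
        rw [eq_neg_iff_add_eq_zero, ← h0]
        dsimp only
        abel
      rw [h1]; exact neg_mem hl
    have h₁' := (mem_cls.1 (Finset.mem_coe.1 h₁)).2
    have h₂' := (mem_cls.1 (Finset.mem_coe.1 h₂)).2
    have h₃' := (mem_cls.1 (Finset.mem_coe.1 h₃)).2
    have h₄' := (mem_cls.1 (Finset.mem_coe.1 h₄)).2
    rw [mem_freqLattice] at hl'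
    simp only [gam, Pi.sub_apply, Pi.add_apply, Matrix.cons_val] at hl'
    have hp2 : (p : ℤ) ^ (2 * (a + e)) = ((p : ℤ) ^ b) ^ 2 := by rw [← pow_mul, mul_comm 2]
    have hp3 : ((p : ℤ) ^ b) ^ 2 ∣ ((p : ℤ) ^ b) ^ 3 := pow_dvd_pow _ (by norm_num)
    refine hbad (Finset.mem_filter.2 ⟨Finset.mem_product.2 ⟨hy, hy'⟩,
      n₁ - η, n₂ - η, n₃ - η, n₄ - η, dvd_cong h₁' (by ring), dvd_cong h₂' (by ring),
      dvd_cong h₃' (by ring), dvd_cong h₄' (by ring), ?_, ?_⟩)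
    · rw [hp2]; exact dvd_cong hl'.2.1 (by ring)
    · rw [hp2]; exact dvd_cong (hp3.trans hl'.2.2) (by ring)
  · rintro ⟨y₁, y₂⟩ - ⟨y₃, y₄⟩ -
    have hb : ∀ y, ∫ x, ‖g y x‖ ^ 4 * W x ∂cubeMeas ≤ M := fun y => hM _ (hunit y)
    have hint : ∀ y, Integrable (fun x => ‖g y x‖ ^ 4 * W x) cubeMeas := fun y =>
      integrable_of_cont (((hcg y).norm.pow _).mul hWc)
    calc ∫ x, ‖g y₁ x * g y₂ x‖ * ‖g y₃ x * g y₄ x‖ * W x ∂cubeMeas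
        ≤ ∫ x, (1 / 4) * ((‖g y₁ x‖ ^ 4 * W x + ‖g y₂ x‖ ^ 4 * W x) +
            (‖g y₃ x‖ ^ 4 * W x + ‖g y₄ x‖ ^ 4 * W x)) ∂cubeMeas := by
          refine integral_mono (integrable_of_cont
            ((((hcg _).mul (hcg _)).norm.mul ((hcg _).mul (hcg _)).norm).mul hWc))
            ((((hint _).add (hint _)).add ((hint _).add (hint _))).const_mul _) fun x => ?_
          dsimp only
          rw [norm_mul, norm_mul]
          have h1 : ∀ u v w z : ℝ, u * v * (w * z) ≤
              (1 / 4) * (u ^ 4 + v ^ 4 + (w ^ 4 + z ^ 4)) := by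
            intro u v w z
            nlinarith [sq_nonneg (u * v - w * z), sq_nonneg (u ^ 2 - v ^ 2),
              sq_nonneg (w ^ 2 - z ^ 2)]
          have := mul_le_mul_of_nonneg_right (h1 ‖g y₁ x‖ ‖g y₂ x‖ ‖g y₃ x‖ ‖g y₄ x‖)
            (show 0 ≤ W x by positivity)
          linarith
      _ ≤ M := by
          have hadd : ∀ y y', Integrable (fun x => ‖g y x‖ ^ 4 * W x + ‖g y' x‖ ^ 4 * W x)
              cubeMeas := fun y y' => (hint y).add (hint y')
          rw [integral_const_mul, integral_add (hadd y₁ y₂) (hadd y₃ y₄),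
            integral_add (hint _) (hint _), integral_add (hint _) (hint _)]
          linarith [hb y₁, hb y₂, hb y₃, hb y₄]

/-! ### Iteration -/

/-- A bound `J(N) ≪ N ^ lam` for all `N` rescales to residue classes with the gain
`q ^ (-lam)`. -/
lemma J_cls_le {C lam : ℝ} (hl0 : 0 ≤ lam) (hl : lam ≤ 12) (hC : 0 < C)
    (hJ : ∀ N : ℕ, 1 ≤ N → J (Finset.Icc 1 (N : ℤ)) ≤ C * (N : ℝ) ^ lam)
    {X q : ℕ} (hq : 0 < q) (hqX : q ≤ X) (η : ℤ) :
    J (cls (Finset.Icc 1 (X : ℤ)) q η) ≤ 4096 * C * ((X : ℝ) ^ lam * (q : ℝ) ^ (-lam)) := by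
  have hX : 0 < X := lt_of_lt_of_le hq hqX
  have hqR : (0 : ℝ) < q := by exact_mod_cast hq
  refine (J_cls X q hq η).trans ((hJ _ (Nat.le_add_left 1 _)).trans ?_)
  have h1 : ((X / q + 1 : ℕ) : ℝ) ≤ 2 * ((X : ℝ) * (q : ℝ)⁻¹) := by
    have h2 : ((X / q : ℕ) : ℝ) ≤ (X : ℝ) / q := Nat.cast_div_le
    have h3 : (1 : ℝ) ≤ (X : ℝ) / q := by rw [le_div_iff₀ hqR, one_mul]; exact_mod_cast hqX
    rw [← div_eq_mul_inv]; push_cast; linarith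
  calc C * ((X / q + 1 : ℕ) : ℝ) ^ lam ≤ C * (2 * ((X : ℝ) * (q : ℝ)⁻¹)) ^ lam := by gcongr
    _ = C * ((2 : ℝ) ^ lam * ((X : ℝ) ^ lam * (q : ℝ) ^ (-lam))) := by
      rw [Real.mul_rpow (by norm_num) (by positivity),
        Real.mul_rpow (by positivity) (by positivity), Real.inv_rpow hqR.le, Real.rpow_neg hqR.le]
    _ ≤ C * ((4096 : ℝ) * ((X : ℝ) ^ lam * (q : ℝ) ^ (-lam))) := by
      have : (2 : ℝ) ^ lam ≤ 4096 := by
        calc (2 : ℝ) ^ lam ≤ (2 : ℝ) ^ (12 : ℝ) := Real.rpow_le_rpow_of_exponent_le (by norm_num) hl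
          _ = 4096 := by norm_num
      gcongr
    _ = _ := by ring

/-- The bookkeeping of exponents when the Hölder steps are composed. -/
lemma rpow_combine {u P R : ℝ} (hu : 0 < u) (hP : 0 < P) (hR : 0 < R) (e₁ e₂ e₃ s : ℝ) :
    (u * P ^ e₁) ^ (1 / 3 : ℝ) *
      (P ^ s * ((u * P ^ e₂) ^ (1 / 4 : ℝ) * ((u / R ^ 2) * P ^ e₃) ^ (3 / 4 : ℝ))) ^ (2 / 3 : ℝ) =
    u / R * P ^ (e₁ / 3 + 2 / 3 * s + e₂ / 6 + e₃ / 2) := by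
  obtain ⟨x, rfl⟩ : ∃ x, u = Real.exp x := ⟨Real.log u, (Real.exp_log hu).symm⟩
  obtain ⟨y, rfl⟩ : ∃ x, P = Real.exp x := ⟨Real.log P, (Real.exp_log hP).symm⟩
  obtain ⟨z, rfl⟩ : ∃ x, R = Real.exp x := ⟨Real.log R, (Real.exp_log hR).symm⟩
  simp only [← Real.exp_mul, ← Real.exp_add, ← Real.exp_sub, ← Real.exp_nat_mul]
  congr 1
  push_cast
  ring

/-- The iterated bilinear estimate. If `J(N) ≪ N ^ (6 + Δ)`, then each iteration gains a further
factor `p ^ (-(Δ / 6) (3 b - a))` over the trivial bound for the `(4, 8)` moment, as long as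
`p ^ (3 ^ n b)` stays below `X`. -/
lemma iterate_bound {C Δ : ℝ} (hΔ0 : 0 ≤ Δ) (hΔ : Δ ≤ 6) (hC : 0 < C)
    (hJ : ∀ N : ℕ, 1 ≤ N → J (Finset.Icc 1 (N : ℤ)) ≤ C * (N : ℝ) ^ (6 + Δ))
    {p B X : ℕ} (hp : p.Prime) (h5 : 5 ≤ p) (hB : 1 ≤ B) (hX : p ^ B ≤ X) (n : ℕ) :
    ∀ a b : ℕ, 1 ≤ a → a ≤ b → 3 ^ n * b ≤ B → ∀ ξ η : ℤ, ¬ (p : ℤ) ∣ ξ - η →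
      mom (cls (Finset.Icc 1 (X : ℤ)) ((p : ℤ) ^ a) ξ) (cls (Finset.Icc 1 (X : ℤ)) ((p : ℤ) ^ b) η)
        4 8 ≤ (2 * B : ℝ) ^ 2 * (4096 * C) * (X : ℝ) ^ (6 + Δ) *
          (p : ℝ) ^ (-(2 * a + 4 * b : ℝ) - n * (Δ / 6) * (3 * b - a)) := by
  have hP1 : (1 : ℝ) ≤ p := by exact_mod_cast hp.one_lt.le
  have hP0 : (0 : ℝ) < p := by linarith
  have hX0 : (0 : ℝ) < X := by
    have : 0 < X := lt_of_lt_of_le (pow_pos hp.pos B) hX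
    exact_mod_cast this
  have hBR : (1 : ℝ) ≤ B := by exact_mod_cast hB
  have hT : 0 < (X : ℝ) ^ (6 + Δ) := Real.rpow_pos_of_pos hX0 _
  set T := (X : ℝ) ^ (6 + Δ) with hTdef
  set S := Finset.Icc 1 (X : ℤ) with hS
  have hJb : ∀ b : ℕ, b ≤ B → ∀ η : ℤ, J (cls S ((p : ℤ) ^ b) η) ≤
      4096 * C * T * (p : ℝ) ^ (-(6 + Δ) * b) := by
    intro b hb η
    have h1 := J_cls_le (by linarith) (by linarith) hC hJ (pow_pos hp.pos b)
      ((Nat.pow_le_pow_right hp.pos hb).trans hX) η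
    push_cast at h1
    rw [← Real.rpow_natCast (p : ℝ) b, ← Real.rpow_mul hP0.le] at h1
    calc _ ≤ _ := h1
      _ = _ := by rw [show (b : ℝ) * -(6 + Δ) = -(6 + Δ) * b by ring]; ring
  induction n with
  | zero =>
    intro a b ha hab hbB ξ η hξ
    have hb : b ≤ B := by simpa using hbB
    refine (mom_holder _ _ (i₁ := 12) (j₁ := 0) (i₂ := 0) (j₂ := 12) (s := 1 / 3) (t := 2 / 3)
      (by norm_num) (by norm_num) (by norm_num) (by norm_num) (by norm_num)).trans ?_
    rw [mom_left, mom_right]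
    have hCT : 0 < 4096 * C * T := by positivity
    calc _ ≤ (4096 * C * T * (p : ℝ) ^ (-(6 + Δ) * a)) ^ (1 / 3 : ℝ) *
          (4096 * C * T * (p : ℝ) ^ (-(6 + Δ) * b)) ^ (2 / 3 : ℝ) :=
          mul_le_mul (Real.rpow_le_rpow (J_nonneg _) (hJb a (hab.trans hb) ξ) (by norm_num))
            (Real.rpow_le_rpow (J_nonneg _) (hJb b hb η) (by norm_num))
            (Real.rpow_nonneg (J_nonneg _) _) (by positivity)
      _ = 4096 * C * T * (p : ℝ) ^ (-(6 + Δ) / 3 * (a + 2 * b)) := by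
          obtain ⟨x, hx⟩ : ∃ x, 4096 * C * T = Real.exp x := ⟨Real.log _, (Real.exp_log hCT).symm⟩
          obtain ⟨y, hy⟩ : ∃ x, (p : ℝ) = Real.exp x := ⟨Real.log _, (Real.exp_log hP0).symm⟩
          rw [hx, hy]
          simp only [← Real.exp_mul, ← Real.exp_add]
          congr 1
          ring
      _ ≤ (2 * B : ℝ) ^ 2 * (4096 * C * T) *
          (p : ℝ) ^ (-(2 * a + 4 * b : ℝ) - (0 : ℕ) * (Δ / 6) * (3 * b - a)) := by
          have h1 : (1 : ℝ) ≤ (2 * B : ℝ) ^ 2 := one_le_pow₀ (by linarith)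
          refine mul_le_mul (by nlinarith) (Real.rpow_le_rpow_of_exponent_le hP1 ?_)
            (by positivity) (by positivity)
          have : (0 : ℝ) ≤ Δ * (a + 2 * b) := by positivity
          push_cast
          linarith
      _ = _ := by ring
  | succ n ih =>
    intro a b ha hab hbB ξ η hξ
    obtain ⟨e, rfl⟩ := Nat.exists_eq_add_of_le hab
    have h3n : 1 ≤ 3 ^ n := Nat.one_le_pow _ _ (by norm_num)
    rw [pow_succ] at hbB
    have hbB' : a + e ≤ B := by nlinarith
    set u := (2 * B : ℝ) ^ 2 * (4096 * C) * T with hu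
    have hu0 : 0 < u := by positivity
    have hR : (0 : ℝ) < 2 * B := by linarith
    have huR : u / (2 * B : ℝ) ^ 2 = 4096 * C * T := by
      rw [hu]; field_simp
    set e₁ : ℝ := -(2 * (a + e : ℕ) + 4 * (a + 2 * e : ℕ) : ℝ) -
      n * (Δ / 6) * (3 * (a + 2 * e : ℕ) - (a + e : ℕ)) with he₁
    set e₂ : ℝ := -(2 * (a + e : ℕ) + 4 * (3 * (a + e) : ℕ) : ℝ) -
      n * (Δ / 6) * (3 * (3 * (a + e) : ℕ) - (a + e : ℕ)) with he₂
    set e₃ : ℝ := -(6 + Δ) * (a + e : ℕ) with he₃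
    set s : ℝ := ((2 * a + e : ℕ) : ℝ) with hs
    have hneg : ∀ {ξ' : ℤ}, ¬ (p : ℤ) ∣ ξ' - η → ¬ (p : ℤ) ∣ η - ξ' := fun h h' =>
      h (dvd_cong (dvd_neg.2 h') (by ring))
    -- the `(2, 10)` moment at the finest scale, by Hölder and the induction hypothesis
    have hfine : ∀ ξ' : ℤ, ¬ (p : ℤ) ∣ ξ' - η →
        mom (cls S ((p : ℤ) ^ (3 * (a + e))) ξ') (cls S ((p : ℤ) ^ (a + e)) η) 2 10 ≤
          (u * (p : ℝ) ^ e₂) ^ (1 / 4 : ℝ) *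
            (u / (2 * B : ℝ) ^ 2 * (p : ℝ) ^ e₃) ^ (3 / 4 : ℝ) := by
      intro ξ' hξ'
      refine (mom_holder _ _ (i₁ := 8) (j₁ := 4) (i₂ := 0) (j₂ := 12) (s := 1 / 4) (t := 3 / 4)
        (by norm_num) (by norm_num) (by norm_num) (by norm_num) (by norm_num)).trans ?_
      rw [mom_right, mom_symm, huR]
      have h1 := ih (a + e) (3 * (a + e)) (by omega) (by omega) (by linarith) η ξ' (hneg hξ')
      exact mul_le_mul (Real.rpow_le_rpow (mom_nonneg _ _ _ _) h1 (by norm_num))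
        (Real.rpow_le_rpow (J_nonneg _) (hJb _ hbB' η) (by norm_num))
        (Real.rpow_nonneg (J_nonneg _) _) (by positivity)
    -- the `(4, 8)` moment at the intermediate scale
    have hmid : ∀ ξ' : ℤ, ¬ (p : ℤ) ∣ ξ' - η →
        mom (cls S ((p : ℤ) ^ (a + 2 * e)) ξ') (cls S ((p : ℤ) ^ (a + e)) η) 4 8 ≤
          u / (2 * B) * (p : ℝ) ^ (e₁ / 3 + 2 / 3 * s + e₂ / 6 + e₃ / 2) := by
      intro ξ' hξ'
      refine (mom_holder _ _ (i₁ := 8) (j₁ := 4) (i₂ := 2) (j₂ := 10) (s := 1 / 3) (t := 2 / 3)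
        (by norm_num) (by norm_num) (by norm_num) (by norm_num) (by norm_num)).trans ?_
      rw [← rpow_combine hu0 hP0 hR e₁ e₂ e₃ s]
      have h1 := ih (a + e) (a + 2 * e) (by omega) (by omega) (by nlinarith) η ξ' (hneg hξ')
      have h2 := refine_two hp h5 (a := a + 2 * e) (b := a + e) (by omega) (by omega) S hξ'
        (by positivity) hfine
      rw [show 3 * (a + e) - (a + 2 * e) = 2 * a + e by omega, ← Real.rpow_natCast] at h2
      rw [mom_symm _ _ 8 4]
      exact mul_le_mul (Real.rpow_le_rpow (mom_nonneg _ _ _ _) h1 (by norm_num))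
        (Real.rpow_le_rpow (mom_nonneg _ _ _ _) h2 (by norm_num))
        (Real.rpow_nonneg (mom_nonneg _ _ _ _) _) (by positivity)
    refine (refine_four hp h5 ha S hξ (by positivity) hmid).trans ?_
    have he : (2 * e + 1 : ℝ) ≤ 2 * B := by
      have : e + 1 ≤ B := by omega
      have : (e + 1 : ℝ) ≤ B := by exact_mod_cast this
      linarith
    calc (2 * e + 1 : ℝ) * (p : ℝ) ^ (4 * e) *
          (u / (2 * B) * (p : ℝ) ^ (e₁ / 3 + 2 / 3 * s + e₂ / 6 + e₃ / 2))
        ≤ (2 * B) * (p : ℝ) ^ (4 * e) *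
          (u / (2 * B) * (p : ℝ) ^ (e₁ / 3 + 2 / 3 * s + e₂ / 6 + e₃ / 2)) := by gcongr
      _ = u * (p : ℝ) ^ (((4 * e : ℕ) : ℝ) + (e₁ / 3 + 2 / 3 * s + e₂ / 6 + e₃ / 2)) := by
          rw [Real.rpow_add hP0 ((4 * e : ℕ) : ℝ) (e₁ / 3 + 2 / 3 * s + e₂ / 6 + e₃ / 2), Real.rpow_natCast]; field_simp
      _ ≤ _ := by
          refine mul_le_mul_of_nonneg_left (Real.rpow_le_rpow_of_exponent_le hP1 ?_) hu0.le
          rw [he₁, he₂, he₃, hs]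
          push_cast
          have h1 : (0 : ℝ) ≤ Δ * a := by positivity
          nlinarith

/-! ### Broad-narrow decomposition -/

lemma pow_sum_le {ι : Type*} (s : Finset ι) (f : ι → ℝ) (hf : ∀ i ∈ s, 0 ≤ f i) (n : ℕ) :
    (∑ i ∈ s, f i) ^ (n + 1) ≤ (s.card : ℝ) ^ n * ∑ i ∈ s, f i ^ (n + 1) := by
  rcases s.eq_empty_or_nonempty with rfl | hs
  · simp
  · have hc : (0 : ℝ) < (s.card : ℝ) ^ n := pow_pos (by exact_mod_cast hs.card_pos) n
    have := pow_sum_div_card_le_sum_pow hf n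
    rw [div_le_iff₀ hc] at this
    linarith

/-- The pointwise broad-narrow inequality: a sum of `p` terms is controlled by its diagonal part
and by the products of distinct terms. -/
lemma broad_narrow (p : ℕ) (t : ℕ → ℝ) (ht : ∀ y, 0 ≤ t y) :
    (∑ y ∈ Finset.range p, t y) ^ 12 ≤
      32 * ((p : ℝ) ^ 5 * ∑ y ∈ Finset.range p, t y ^ 12 +
        (p : ℝ) ^ 10 * ∑ z ∈ (Finset.range p).offDiag, t z.1 ^ 6 * t z.2 ^ 6) := by
  have h1 : (∑ y ∈ Finset.range p, t y) ^ 2 =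
      ∑ y ∈ Finset.range p, t y ^ 2 + ∑ z ∈ (Finset.range p).offDiag, t z.1 * t z.2 := by
    rw [sq, Finset.sum_mul_sum, ← Finset.sum_product', ← Finset.diag_union_offDiag,
      Finset.sum_union (Finset.disjoint_diag_offDiag _), Finset.sum_diag]
    simp only [sq]
  have h2 := pow_sum_le (Finset.range p) (fun y => t y ^ 2) (fun y _ => by positivity) 5
  have h3 := pow_sum_le (Finset.range p).offDiag (fun z => t z.1 * t z.2)
    (fun z _ => mul_nonneg (ht _) (ht _)) 5
  have h4 := add_pow_le (Finset.sum_nonneg fun y (_ : y ∈ Finset.range p) => sq_nonneg (t y))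
    (Finset.sum_nonneg fun z (_ : z ∈ (Finset.range p).offDiag) => mul_nonneg (ht z.1) (ht z.2)) 6
  have hc : (((Finset.range p).offDiag.card : ℕ) : ℝ) ^ 5 ≤ (p : ℝ) ^ 10 := by
    rw [show (p : ℝ) ^ 10 = ((p * p : ℕ) : ℝ) ^ 5 by push_cast; ring]
    gcongr
    rw [Finset.offDiag_card, Finset.card_range]
    exact Nat.sub_le _ _
  have h5 : ∑ z ∈ (Finset.range p).offDiag, (t z.1 * t z.2) ^ (5 + 1) =
      ∑ z ∈ (Finset.range p).offDiag, t z.1 ^ 6 * t z.2 ^ 6 :=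
    Finset.sum_congr rfl fun z _ => mul_pow _ _ _
  have h6 : ∑ y ∈ Finset.range p, (t y ^ 2) ^ (5 + 1) = ∑ y ∈ Finset.range p, t y ^ 12 :=
    Finset.sum_congr rfl fun y _ => by rw [← pow_mul]
  have h7 : 0 ≤ ∑ z ∈ (Finset.range p).offDiag, t z.1 ^ 6 * t z.2 ^ 6 :=
    Finset.sum_nonneg fun z _ => mul_nonneg (pow_nonneg (ht _) _) (pow_nonneg (ht _) _)
  rw [h5] at h3
  rw [h6, Finset.card_range] at h2
  calc (∑ y ∈ Finset.range p, t y) ^ 12 = ((∑ y ∈ Finset.range p, t y) ^ 2) ^ 6 := by ring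
    _ ≤ 2 ^ (6 - 1) * ((∑ y ∈ Finset.range p, t y ^ 2) ^ 6 +
        (∑ z ∈ (Finset.range p).offDiag, t z.1 * t z.2) ^ 6) := by rw [h1]; exact h4
    _ ≤ _ := by
      have h8 := h3.trans (mul_le_mul_of_nonneg_right hc h7)
      norm_num at h2 h8 ⊢
      linarith

/-- The broad-narrow inequality for the twelfth moment. -/
lemma J_broad_narrow (S : Finset ℤ) {p : ℕ} (hp : p.Prime) {M₀ M₁ : ℝ} (hM₁ : 0 ≤ M₁)
    (h0 : ∀ y : ℤ, J (cls S p y) ≤ M₀)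
    (h1 : ∀ y z : ℤ, ¬ (p : ℤ) ∣ y - z → mom (cls S p y) (cls S p z) 6 6 ≤ M₁) :
    J S ≤ 32 * ((p : ℝ) ^ 6 * M₀ + (p : ℝ) ^ 12 * M₁) := by
  set f : ℕ → E3 → ℂ := fun y => esum (cls S p y) with hf
  have hc : ∀ y, Continuous fun x => ‖f y x‖ := fun y => (continuous_esum _).norm
  have hsum : ∀ x, esum S x = ∑ y ∈ Finset.range p, f y x := by
    intro x
    have := esum_cls S 1 p one_pos hp.pos 0 x
    simpa [cls, hf] using this
  have hpt : ∀ x, ‖esum S x‖ ^ 12 ≤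
      32 * ((p : ℝ) ^ 5 * ∑ y ∈ Finset.range p, ‖f y x‖ ^ 12 +
        (p : ℝ) ^ 10 * ∑ z ∈ (Finset.range p).offDiag, ‖f z.1 x‖ ^ 6 * ‖f z.2 x‖ ^ 6) := by
    intro x
    refine le_trans ?_ (broad_narrow p (fun y => ‖f y x‖) fun y => norm_nonneg _)
    rw [hsum]
    gcongr
    exact norm_sum_le _ _
  have c1 : Continuous fun x => ∑ y ∈ Finset.range p, ‖f y x‖ ^ 12 :=
    continuous_finsetSum _ fun y _ => (hc y).pow _
  have c2 : Continuous fun x =>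
      ∑ z ∈ (Finset.range p).offDiag, ‖f z.1 x‖ ^ 6 * ‖f z.2 x‖ ^ 6 :=
    continuous_finsetSum _ fun z _ => ((hc _).pow _).mul ((hc _).pow _)
  calc J S ≤ ∫ x, 32 * ((p : ℝ) ^ 5 * ∑ y ∈ Finset.range p, ‖f y x‖ ^ 12 +
        (p : ℝ) ^ 10 * ∑ z ∈ (Finset.range p).offDiag, ‖f z.1 x‖ ^ 6 * ‖f z.2 x‖ ^ 6) ∂cubeMeas :=
        integral_mono (integrable_of_cont ((continuous_esum S).norm.pow _))
          (integrable_of_cont (by fun_prop)) hpt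
    _ = 32 * ((p : ℝ) ^ 5 * ∑ y ∈ Finset.range p, J (cls S p y) + (p : ℝ) ^ 10 *
        ∑ z ∈ (Finset.range p).offDiag, mom (cls S p z.1) (cls S p z.2) 6 6) := by
        rw [integral_const_mul, integral_add (integrable_of_cont (by fun_prop)) (integrable_of_cont (by fun_prop)), integral_const_mul, integral_const_mul,
          integral_finsetSum _ fun y _ => integrable_of_cont (g := fun x => ‖f y x‖ ^ 12) ((hc y).pow _),
          integral_finsetSum _ fun z _ => integrable_of_cont
            (g := fun x => ‖f z.1 x‖ ^ 6 * ‖f z.2 x‖ ^ 6) (((hc _).pow _).mul ((hc _).pow _))]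
        rfl
    _ ≤ 32 * ((p : ℝ) ^ 5 * (p * M₀) + (p : ℝ) ^ 10 * ((p : ℝ) ^ 2 * M₁)) := by
        gcongr
        · refine (Finset.sum_le_sum fun (y : ℕ) _ => h0 y).trans (le_of_eq ?_)
          rw [Finset.sum_const, Finset.card_range, nsmul_eq_mul]
        · refine (Finset.sum_le_sum (g := fun _ => M₁) fun z hz => h1 _ _ ?_).trans ?_
          · rw [Finset.mem_offDiag, Finset.mem_range, Finset.mem_range] at hz
            obtain ⟨hy, hz, hne⟩ := hz
            intro hd
            obtain ⟨k, hk⟩ := hd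
            have hk0 : k = 0 := by
              by_contra hk0
              rcases lt_or_gt_of_ne hk0 with h | h <;> nlinarith
            rw [hk0] at hk
            omega
          · rw [Finset.sum_const, nsmul_eq_mul]
            refine mul_le_mul_of_nonneg_right ?_ hM₁
            rw [Finset.offDiag_card, Finset.card_range, sq]
            exact_mod_cast Nat.sub_le _ _
    _ = _ := by ring

/-- One step of the bootstrapping, for a fixed prime: a bound `J(N) ≪ N ^ (6 + Δ)` gains the
factor `p ^ (-ε)` as soon as `p ^ (3 ^ n) ≤ X`, where `n` depends on `ε` only. -/
lemma J_gain {C Δ ε : ℝ} (hε : 0 < ε) (hεΔ : ε ≤ Δ) (hΔ : Δ ≤ 6) (hC : 0 < C)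
    (hJ : ∀ N : ℕ, 1 ≤ N → J (Finset.Icc 1 (N : ℤ)) ≤ C * (N : ℝ) ^ (6 + Δ))
    {n : ℕ} (hn : 6 + ε ≤ n * (ε / 3)) {p X : ℕ} (hp : p.Prime) (h5 : 5 ≤ p)
    (hX : p ^ 3 ^ n ≤ X) :
    J (Finset.Icc 1 (X : ℤ)) ≤
      (64 * (2 * (3 ^ n : ℕ) : ℝ) ^ 2 * 4096) * C * ((X : ℝ) ^ (6 + Δ) * (p : ℝ) ^ (-ε)) := by
  have hP1 : (1 : ℝ) ≤ p := by exact_mod_cast hp.one_lt.le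
  have hP0 : (0 : ℝ) < p := by linarith
  have hΔ0 : 0 ≤ Δ := by linarith
  have hB : 1 ≤ 3 ^ n := Nat.one_le_pow _ _ (by norm_num)
  have hpX : p ≤ X := by
    refine le_trans ?_ hX
    calc p = p ^ 1 := (pow_one p).symm
      _ ≤ p ^ 3 ^ n := Nat.pow_le_pow_right hp.pos hB
  have hit := iterate_bound hΔ0 hΔ hC hJ hp h5 hB hX n 1 1 le_rfl le_rfl (by simp)
  have hBR : (1 : ℝ) ≤ (3 ^ n : ℕ) := by exact_mod_cast hB
  set R : ℝ := (2 * (3 ^ n : ℕ) : ℝ) ^ 2 with hR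
  have hR1 : 1 ≤ R := one_le_pow₀ (by linarith)
  set T := (X : ℝ) ^ (6 + Δ) with hT
  have hT0 : 0 ≤ T := by positivity
  simp only [pow_one] at hit
  set E : ℝ := -(2 * (1 : ℕ) + 4 * (1 : ℕ) : ℝ) - n * (Δ / 6) * (3 * (1 : ℕ) - (1 : ℕ)) with hE
  set M₁ : ℝ := R * (4096 * C) * T * (p : ℝ) ^ E with hM₁
  have hM₁0 : 0 ≤ M₁ := by positivity
  have hsq : M₁ ^ (1 / 2 : ℝ) * M₁ ^ (1 / 2 : ℝ) = M₁ := by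
    rw [← Real.rpow_add_of_nonneg hM₁0 (by norm_num) (by norm_num)]; norm_num
  have h66 : ∀ y z : ℤ, ¬ (p : ℤ) ∣ y - z →
      mom (cls (Finset.Icc 1 (X : ℤ)) p y) (cls (Finset.Icc 1 (X : ℤ)) p z) 6 6 ≤ M₁ := by
    intro y z hyz
    have hzy : ¬ (p : ℤ) ∣ z - y := fun h => hyz (dvd_cong (dvd_neg.2 h) (by ring))
    refine (mom_holder _ _ (i₁ := 4) (j₁ := 8) (i₂ := 8) (j₂ := 4) (s := 1 / 2) (t := 1 / 2)
      (by norm_num) (by norm_num) (by norm_num) (by norm_num) (by norm_num)).trans ?_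
    rw [← hsq, mom_symm _ _ 8 4]
    exact mul_le_mul
      (Real.rpow_le_rpow (mom_nonneg _ _ _ _) (hit y z hyz) (by norm_num))
      (Real.rpow_le_rpow (mom_nonneg _ _ _ _) (hit z y hzy) (by norm_num))
      (Real.rpow_nonneg (mom_nonneg _ _ _ _) _) (by positivity)
  have hbn := J_broad_narrow (Finset.Icc 1 (X : ℤ)) hp hM₁0
    (fun y => J_cls_le (by linarith) (by linarith) hC hJ hp.pos hpX y) h66
  refine hbn.trans ?_
  have e1 : (p : ℝ) ^ 6 * (p : ℝ) ^ (-(6 + Δ)) ≤ (p : ℝ) ^ (-ε) := by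
    rw [← Real.rpow_natCast, ← Real.rpow_add hP0]
    refine Real.rpow_le_rpow_of_exponent_le hP1 ?_
    push_cast; linarith
  have e2 : (p : ℝ) ^ 12 * (p : ℝ) ^ E ≤ (p : ℝ) ^ (-ε) := by
    rw [← Real.rpow_natCast, ← Real.rpow_add hP0]
    refine Real.rpow_le_rpow_of_exponent_le hP1 ?_
    have : (n : ℝ) * ε ≤ n * Δ := by gcongr
    rw [hE]; push_cast; linarith
  have hCT : 0 ≤ 4096 * C * T := by positivity
  have hpe : 0 ≤ (p : ℝ) ^ (-ε) := by positivity
  calc 32 * ((p : ℝ) ^ 6 * (4096 * C * (T * (p : ℝ) ^ (-(6 + Δ)))) + (p : ℝ) ^ 12 * M₁)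
      = 32 * (1 * (4096 * C * T) * ((p : ℝ) ^ 6 * (p : ℝ) ^ (-(6 + Δ))) +
          R * (4096 * C * T) * ((p : ℝ) ^ 12 * (p : ℝ) ^ E)) := by rw [hM₁]; ring
    _ ≤ 32 * (R * (4096 * C * T) * (p : ℝ) ^ (-ε) + R * (4096 * C * T) * (p : ℝ) ^ (-ε)) := by
        gcongr
    _ = _ := by ring

/-! ### Bootstrapping the exponent -/

lemma J_trivial (X : ℕ) : J (Finset.Icc 1 (X : ℤ)) ≤ (X : ℝ) ^ 12 := by
  rw [J_eq_card]
  have : (sols (Finset.Icc 1 (X : ℤ))).card ≤ X ^ 12 := by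
    refine (Finset.card_filter_le _ _).trans (le_of_eq ?_)
    simp only [Finset.card_product, Fintype.card_piFinset, Int.card_Icc, Finset.prod_const,
      Finset.card_univ, Fintype.card_fin]
    simp only [add_sub_cancel_right, Int.toNat_natCast]
    ring
  exact_mod_cast this

/-- `Adm lam` says that `J(X) ≪ X ^ lam`. -/
def Adm (lam : ℝ) : Prop :=
  ∃ C : ℝ, 0 < C ∧ ∀ X : ℕ, 1 ≤ X → J (Finset.Icc 1 (X : ℤ)) ≤ C * (X : ℝ) ^ lam

lemma Adm.mono {l m : ℝ} (h : Adm l) (hlm : l ≤ m) : Adm m := by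
  obtain ⟨C, hC, hJ⟩ := h
  refine ⟨C, hC, fun X hX => (hJ X hX).trans ?_⟩
  have : (1 : ℝ) ≤ X := by exact_mod_cast hX
  gcongr

/-- A prime of size comparable to `X ^ (1 / B)`, by Bertrand's postulate. -/
lemma exists_prime_root {B X : ℕ} (hB : 1 ≤ B) (hX : 10 ^ B ≤ X) :
    ∃ p : ℕ, p.Prime ∧ 5 ≤ p ∧ p ^ B ≤ X ∧ (X : ℝ) ^ (1 / (B : ℝ)) / 2 ≤ p := by
  have hBR : (0 : ℝ) < B := by exact_mod_cast hB
  set Y : ℝ := (X : ℝ) ^ (1 / (B : ℝ)) with hY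
  have hYB : Y ^ B = X := by
    rw [hY, one_div]; exact Real.rpow_inv_natCast_pow (by positivity) (by omega)
  have hY0 : 0 ≤ Y := by positivity
  have hY10 : 10 ≤ Y := by
    refine le_of_pow_le_pow_left₀ (n := B) (by omega) hY0 ?_
    rw [hYB]; exact_mod_cast hX
  set m := ⌊Y / 2⌋₊ with hm
  have hm5 : 5 ≤ m := Nat.le_floor (by push_cast; linarith)
  obtain ⟨p, hp, hmp, hpm⟩ := Nat.exists_prime_lt_and_le_two_mul m (by omega)
  refine ⟨p, hp, by omega, ?_, ?_⟩
  · have h1 : (p : ℝ) ≤ Y := by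
      have h2 : (m : ℝ) ≤ Y / 2 := Nat.floor_le (by positivity)
      have h3 : (p : ℝ) ≤ 2 * m := by exact_mod_cast hpm
      linarith
    have : ((p ^ B : ℕ) : ℝ) ≤ X := by
      rw [← hYB]; push_cast; gcongr
    exact_mod_cast this
  · have h2 : Y / 2 < m + 1 := Nat.lt_floor_add_one _
    have h3 : (m + 1 : ℝ) ≤ p := by exact_mod_cast hmp
    linarith

/-- The exponent improves by a fixed amount `κ > 0` as long as it exceeds `6 + ε`. -/
lemma Adm.improve {ε : ℝ} (hε : 0 < ε) :
    ∃ κ : ℝ, 0 < κ ∧ κ ≤ ε ∧ ∀ Δ : ℝ, ε ≤ Δ → Δ ≤ 6 → Adm (6 + Δ) → Adm (6 + Δ - κ) := by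
  obtain ⟨n, hn⟩ := exists_nat_ge ((6 + ε) / (ε / 3))
  have hn' : 6 + ε ≤ n * (ε / 3) := by rwa [div_le_iff₀ (by positivity)] at hn
  have hB : 1 ≤ 3 ^ n := Nat.one_le_pow _ _ (by norm_num)
  set B := 3 ^ n with hBdef
  have hBR : (1 : ℝ) ≤ B := by exact_mod_cast hB
  have hκ : ε / B ≤ ε := div_le_self hε.le hBR
  refine ⟨ε / B, by positivity, hκ, ?_⟩
  rintro Δ hεΔ hΔ ⟨C, hC, hJ⟩
  set K : ℝ := (64 * (2 * (B : ℕ) : ℝ) ^ 2 * 4096) * C * (2 : ℝ) ^ ε with hK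
  have hK0 : 0 < K := by positivity
  refine ⟨K + (10 : ℝ) ^ (12 * B), by positivity, fun X hX => ?_⟩
  have hX1 : (1 : ℝ) ≤ X := by exact_mod_cast hX
  have hX0 : (0 : ℝ) < X := by linarith
  have hXp : 0 ≤ (X : ℝ) ^ (6 + Δ - ε / B) := by positivity
  rcases lt_or_ge X (10 ^ B) with hs | hl
  · have h1 : (1 : ℝ) ≤ (X : ℝ) ^ (6 + Δ - ε / B) := Real.one_le_rpow hX1 (by linarith)
    have h2 : (X : ℝ) ^ 12 ≤ (10 : ℝ) ^ (12 * B) := by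
      rw [mul_comm, pow_mul]
      have : (X : ℝ) ≤ (10 : ℝ) ^ B := by exact_mod_cast hs.le
      gcongr
    have h3 : (0 : ℝ) < (10 : ℝ) ^ (12 * B) := by positivity
    refine (J_trivial X).trans (h2.trans ?_)
    nlinarith
  · obtain ⟨p, hp, h5, hpB, hpY⟩ := exists_prime_root hB hl
    have hg := J_gain hε hεΔ hΔ hC hJ hn' hp h5 hpB
    have hp' : (p : ℝ) ^ (-ε) ≤ (2 : ℝ) ^ ε * (X : ℝ) ^ (-(ε / B)) := by
      calc (p : ℝ) ^ (-ε) ≤ ((X : ℝ) ^ (1 / (B : ℝ)) / 2) ^ (-ε) :=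
            Real.rpow_le_rpow_of_nonpos (by positivity) hpY (by linarith)
        _ = (2 : ℝ) ^ ε * (X : ℝ) ^ (-(ε / B)) := by
          rw [Real.div_rpow (by positivity) (by norm_num), ← Real.rpow_mul hX0.le,
            Real.rpow_neg (by norm_num : (0 : ℝ) ≤ 2), div_inv_eq_mul, mul_comm]
          congr 2; ring
    refine hg.trans ?_
    calc _ ≤ (64 * (2 * (B : ℕ) : ℝ) ^ 2 * 4096) * C *
          ((X : ℝ) ^ (6 + Δ) * ((2 : ℝ) ^ ε * (X : ℝ) ^ (-(ε / B)))) := by gcongr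
      _ = K * (X : ℝ) ^ (6 + Δ - ε / B) := by
          rw [sub_eq_add_neg (6 + Δ), Real.rpow_add hX0 (6 + Δ), hK]; ring
      _ ≤ _ := by
          have h3 : (0 : ℝ) < (10 : ℝ) ^ (12 * B) := by positivity
          gcongr
          linarith

lemma adm_six_add {ε : ℝ} (hε : 0 < ε) (hε6 : ε ≤ 6) : Adm (6 + ε) := by
  obtain ⟨κ, hκ, _, himp⟩ := Adm.improve hε
  have key : ∀ k : ℕ, Adm (6 + max ε (6 - k * κ)) := by
    intro k
    induction k with
    | zero =>
      refine Adm.mono (l := 12) ⟨1, one_pos, fun X _ => ?_⟩ ?_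
      · have := J_trivial X
        rw [one_mul]
        exact_mod_cast this
      · have := le_max_right ε (6 - ((0 : ℕ) : ℝ) * κ)
        push_cast at this ⊢
        linarith
    | succ k ih =>
      have hk : 0 ≤ k * κ := by positivity
      refine (himp _ (le_max_left _ _) (max_le hε6 (by linarith)) ih).mono ?_
      push_cast
      rcases le_total ε (6 - k * κ) with h | h
      · rw [max_eq_right h]
        have := le_max_right ε (6 - (k + 1) * κ)
        linarith
      · rw [max_eq_left h]
        have := le_max_left ε (6 - (k + 1) * κ)
        linarith
  obtain ⟨k, hk⟩ := exists_nat_ge (6 / κ)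
  rw [div_le_iff₀ hκ] at hk
  have := key k
  rwa [max_eq_left (by linarith)] at this

lemma esum_Icc (X : ℕ) (x : E3) : esum (Finset.Icc 1 (X : ℤ)) x =
    ∑ j ∈ Finset.Icc 1 X, eR (x 0 * (j : ℝ) + x 1 * (j : ℝ) ^ 2 + x 2 * (j : ℝ) ^ 3) := by
  have : Finset.Icc 1 (X : ℤ) = (Finset.Icc 1 X).map Nat.castEmbedding := by
    ext n
    simp only [Finset.mem_Icc, Finset.mem_map, Nat.castEmbedding_apply]
    constructor
    · rintro ⟨h1, h2⟩
      exact ⟨n.toNat, by omega, by omega⟩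
    · rintro ⟨m, hm, rfl⟩
      omega
  rw [esum, this, Finset.sum_map]
  refine Finset.sum_congr rfl fun j _ => ?_
  simp [chi, gam]

end VMV

/-- **Sharp Vinogradov mean value estimate for degree 3**: for every `ε > 0` there is `C_ε > 0`
such that for every positive integer `X`,
`∫_{[0,1]³} |∑_{j=1}^X e(x₁ j + x₂ j² + x₃ j³)|¹² dx ≤ C_ε X^{6+ε}`. -/
theorem vinogradov_mean_value_deg3 :
    ∀ ε : ℝ, 0 < ε → ∃ C : ℝ, 0 < C ∧ ∀ X : ℕ, 0 < X →
      (∫ x : E3 in Set.univ.pi fun _ : Fin 3 => Set.Icc (0 : ℝ) 1,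
          ‖∑ j ∈ Finset.Icc 1 X,
            eR (x 0 * (j : ℝ) + x 1 * (j : ℝ) ^ 2 + x 2 * (j : ℝ) ^ 3)‖ ^ (12 : ℕ))
        ≤ C * (X : ℝ) ^ ((6 : ℝ) + ε) := by
  intro ε hε
  have h6 : (0 : ℝ) < min ε 6 := lt_min hε (by norm_num)
  obtain ⟨C, hC, hJ⟩ := (VMV.adm_six_add h6 (min_le_right _ _)).mono
    (add_le_add_right (min_le_left ε 6) 6)
  refine ⟨C, hC, fun X hX => ?_⟩
  refine le_of_eq_of_le ?_ (hJ X hX)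
  simp only [VMV.J, VMV.esum_Icc]
  rfl
end
end

section
/- (Parabolic rescaling.) Let 0 < δ < σ < 1 be such that σ/δ ∈ ℕ and δ⁻¹ ∈ ℕ. Let I be an arbitrary interval in [0,1] of length σ. Then for all g : [0,1] → ℂ, ‖E_I g‖_{L¹²(ℝ³)} ≤ D(δ/σ) (∑_{J ∈ P_δ(I)} ‖E_J g‖_{L¹²(ℝ³)}⁴)^{1/4}. -/
/-!
The affine substitution `ξ = l + σ η` turns `E_{[l, l + σ]} g` into `E_{[0,1]} h` with
`h η = g (l + σ η)`, up to a unimodular factor, the Jacobian `σ`, and a linear change of the space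
variable with determinant `σ ^ 6`. All the `L¹²` norms in the claim, on both sides, are therefore
multiplied by one and the same constant (`L12_momExt_rescale`), and the claim becomes the
decoupling inequality for `h` at scale `δ / σ`.

This inequality holds with the constant `Dconst (δ / σ)` as soon as the infimum defining the latter
runs over a nonempty set: the infimum is then attained, since the conditions on `C` are
closed. As `sInf ∅ = 0`, nonemptiness cannot be skipped, and it has to be checked for all
`g : ℝ → ℂ`, with the conventions that a divergent integral, hence the `L12` norm of a function
outside `L¹²`, is `0`. The admissible constant given by `crude_decoupling` is the number `N = σ / δ`
of pieces. If `g` is not integrable, or if `E g` is not in `L¹²`, the left-hand side vanishes.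
Otherwise the triangle inequality in `L¹²` yields the bound, provided that every piece `E_J g` is in
`L¹²` too; this is the one analytic point. It says that `E_{[0,1]} g ∈ L¹²` implies
`E_{[0,a]} g ∈ L¹²`, and follows, on lines parallel to the first coordinate axis, from the
boundedness of sharp frequency truncation on `L¹²(ℝ)` (`trunc_line`).

That bound is M. Riesz's theorem on the conjugate function for the exponent `12`, proved by his
original method. Let `F` have nonnegative spectrum. Integration against the Poisson kernel (the
Cauchy distribution of scale `y`) is then multiplicative on powers of `F`
(`integral_lineExt_sub_pow`). Combined with the pointwise inequality
`v ^ 12 ≤ 2 Re (u + i v) ^ 12 + C u ^ 12` and Jensen's inequality, this controls `Im F` by `Re F` in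
`L¹²` of the Poisson kernel (`riesz_cauchy`). Letting `y → ∞` gives the same on the line
(`riesz_line`). Truncation at frequency `a` reduces to this by reflecting the frequencies below `a`
with a complex conjugation, which does not change the real part.
-/

open MeasureTheory Real

noncomputable section

open Filter Topology ProbabilityTheory
open scoped ENNReal NNReal FourierTransform

/-! ### The characters `eR` and the Poisson kernel -/

lemma eR_add (a b : ℝ) : eR (a + b) = eR a * eR b := by
  simp only [eR, ← Complex.exp_add]; push_cast; ring_nf

lemma norm_eR (a : ℝ) : ‖eR a‖ = 1 := by
  rw [eR, show 2 * (π : ℂ) * Complex.I * a = ((2 * π * a : ℝ) : ℂ) * Complex.I by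
    push_cast; ring]
  exact Complex.norm_exp_ofReal_mul_I _

@[fun_prop]
lemma continuous_eR : Continuous eR := by unfold eR; fun_prop

lemma conj_eR (a : ℝ) : (starRingEnd ℂ) (eR a) = eR (-a) := by
  simp only [eR, ← Complex.exp_conj, map_mul, Complex.conj_I, Complex.conj_ofReal]
  congr 1
  rw [Complex.conj_ofNat]; push_cast; ring

lemma eR_zero : eR 0 = 1 := by simp [eR]

lemma eR_sum {k : ℕ} (f : Fin k → ℝ) : ∏ i, eR (f i) = eR (∑ i, f i) := by
  simp only [eR, ← Complex.exp_sum]; push_cast; rw [Finset.mul_sum]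

/-- The Fourier transform of `exp (-2πy|t|)` is the Cauchy density of scale `y`. -/
lemma integral_exp_abs {y : ℝ} (hy : 0 < y) (w : ℝ) :
    ∫ t : ℝ, Complex.exp (-2 * π * Complex.I * (t * w)) * Complex.exp (-2 * π * y * |t|) =
      ((π⁻¹ * y * (w ^ 2 + y ^ 2)⁻¹ : ℝ) : ℂ) := by
  have hpi : (0 : ℝ) < π := Real.pi_pos
  set a : ℂ := -2 * π * y - 2 * π * w * Complex.I with ha
  set b : ℂ := 2 * π * y - 2 * π * w * Complex.I with hb
  have hre : a.re < 0 := by simp [ha]; positivity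
  have hbe : 0 < b.re := by simp [hb]; positivity
  have e1 : Set.EqOn (fun t : ℝ => Complex.exp (-2 * π * Complex.I * (t * w)) *
      Complex.exp (-2 * π * y * |t|)) (fun t : ℝ => Complex.exp (b * t)) (Set.Iic 0) := by
    intro t ht
    simp only [← Complex.exp_add, abs_of_nonpos (Set.mem_Iic.1 ht), hb]
    congr 1; push_cast; ring
  have e2 : Set.EqOn (fun t : ℝ => Complex.exp (-2 * π * Complex.I * (t * w)) *
      Complex.exp (-2 * π * y * |t|)) (fun t : ℝ => Complex.exp (a * t)) (Set.Ioi 0) := by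
    intro t ht
    simp only [← Complex.exp_add, abs_of_pos (Set.mem_Ioi.1 ht), ha]
    congr 1; ring
  have i1 : IntegrableOn (fun t : ℝ => Complex.exp (b * t)) (Set.Iic 0) :=
    integrableOn_exp_mul_complex_Iic hbe 0
  have i2 : IntegrableOn (fun t : ℝ => Complex.exp (a * t)) (Set.Ioi 0) :=
    integrableOn_exp_mul_complex_Ioi hre 0
  rw [← intervalIntegral.integral_Iic_add_Ioi (b := 0)
    ((integrableOn_congr_fun e1 measurableSet_Iic).2 i1)
    ((integrableOn_congr_fun e2 measurableSet_Ioi).2 i2),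
    setIntegral_congr_fun measurableSet_Iic e1, setIntegral_congr_fun measurableSet_Ioi e2,
    integral_exp_mul_complex_Ioi hre, integral_exp_mul_complex_Iic hbe]
  have ha0 : a ≠ 0 := by intro h; rw [h] at hre; simp at hre
  have hb0 : b ≠ 0 := by intro h; rw [h] at hbe; simp at hbe
  have hq : (w : ℂ) ^ 2 + (y : ℂ) ^ 2 ≠ 0 := by
    have : w ^ 2 + y ^ 2 ≠ 0 := by positivity
    exact_mod_cast this
  have hpc : (π : ℂ) ≠ 0 := by exact_mod_cast hpi.ne'
  have hab : a * b = -(4 * π ^ 2 * (w ^ 2 + y ^ 2)) := by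
    rw [ha, hb]; linear_combination (4 * (π:ℂ)^2*w^2) * Complex.I_sq
  simp only [Complex.ofReal_zero, mul_zero, Complex.exp_zero]
  have : (1:ℂ) / b + -1 / a = (a - b) / (a * b) := by field_simp; ring
  rw [this, hab, show a - b = -(4 * π * y) by rw [ha, hb]; ring]
  push_cast
  field_simp

/-- Integrating the character of frequency `s ≥ 0` against the Poisson kernel of height `y` gives
`exp (-2πys)`. It is because this is multiplicative in `s ≥ 0` that the integral is multiplicative
on functions with nonnegative spectrum. -/
lemma integral_eR_cauchy {y : ℝ≥0} (hy : y ≠ 0) {s : ℝ} (hs : 0 ≤ s) :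
    ∫ x, eR (x * s) ∂(cauchyMeasure 0 y) = (Real.exp (-2 * π * y * s) : ℂ) := by
  have hy' : (0 : ℝ) < y := by positivity
  set f : ℝ → ℂ := fun t => Complex.exp (-2 * π * y * |t|) with hf
  have hcont : Continuous f := by rw [hf]; fun_prop
  have hF : 𝓕 f = fun w => ((cauchyPDFReal 0 y w : ℝ) : ℂ) := by
    ext w
    rw [Real.fourier_eq', cauchyPDFReal_def, sub_zero, ← integral_exp_abs hy' w]
    congr 1; ext t
    simp only [smul_eq_mul, hf]
    congr 2
    simp; ring
  have hint : Integrable f := by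
    have hc : (0 : ℝ) < 2 * π * y := by positivity
    rw [← integrableOn_univ, ← Set.Iic_union_Ioi (a := (0 : ℝ))]
    refine IntegrableOn.union ?_ ?_
    · refine IntegrableOn.congr_fun (f := fun t : ℝ => ((Real.exp (2 * π * y * t) : ℝ) : ℂ))
        (integrableOn_exp_mul_Iic hc 0).ofReal (fun t ht => ?_)
        measurableSet_Iic
      simp [hf, abs_of_nonpos (Set.mem_Iic.1 ht)]
    · refine IntegrableOn.congr_fun (f := fun t : ℝ => ((Real.exp (-(2 * π * y) * t) : ℝ) : ℂ))
        (integrableOn_exp_mul_Ioi (neg_lt_zero.2 hc) 0).ofReal (fun t ht => ?_) measurableSet_Ioi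
      simp [hf, abs_of_pos (Set.mem_Ioi.1 ht)]
  have hFint : Integrable (𝓕 f) := by
    rw [hF]; exact (integrable_cauchyPDFReal 0 ).ofReal
  have key := congrFun (hcont.fourierInv_fourier_eq hint hFint) s
  rw [hF, Real.fourierInv_eq'] at key
  rw [cauchyMeasure_of_scale_ne_zero 0 hy, integral_withDensity_eq_integral_toReal_smul]
  · simp only [hf, abs_of_nonneg hs] at key
    push_cast
    rw [← key]
    congr 1; ext x
    rw [cauchyPDF_def, ENNReal.toReal_ofReal]
    · simp only [eR, smul_eq_mul, Complex.real_smul]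
      rw [mul_comm]
      congr 2
      simp; ring
    · exact (cauchyPDF_pos 0 hy x).le
  · fun_prop
  · simp [cauchyPDF_def]

/-! ### Riesz's inequality for functions with nonnegative spectrum -/

/-- The superposition `∫ H ξ e(x s(ξ)) dν(ξ)` of characters of the real line, with amplitude `H`
and frequencies `s`. The parameter `ξ` ranges over an arbitrary measure space, so that powers are
again of this form, over a product space. -/
def lineExt {Ω : Type*} [MeasurableSpace Ω] (ν : Measure Ω) (H : Ω → ℂ) (s : Ω → ℝ) (x : ℝ) :
    ℂ :=
  ∫ ξ, H ξ * eR (x * s ξ) ∂ν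

section line
variable {Ω : Type*} [MeasurableSpace Ω] {ν : Measure Ω} {H : Ω → ℂ} {s : Ω → ℝ}

lemma continuous_lineExt (hH : Integrable H ν) (hs : Measurable s) :
    Continuous (lineExt ν H s) := by
  unfold lineExt
  refine continuous_of_dominated (bound := fun ξ => ‖H ξ‖) ?_ ?_ hH.norm ?_
  · intro x
    exact hH.aestronglyMeasurable.mul (by fun_prop : Measurable _).aestronglyMeasurable
  · intro x
    exact ae_of_all _ fun ξ => by simp [norm_eR]
  · exact ae_of_all _ fun ξ => by fun_prop

lemma norm_lineExt_le (x : ℝ) : ‖lineExt ν H s x‖ ≤ ∫ ξ, ‖H ξ‖ ∂ν := by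
  refine (norm_integral_le_integral_norm _).trans_eq ?_
  simp [norm_eR]

lemma integral_lineExt [SFinite ν] (hH : Integrable H ν) (hs : Measurable s) (hs0 : ∀ ξ, 0 ≤ s ξ)
    {y : ℝ≥0} (hy : y ≠ 0) :
    ∫ x, lineExt ν H s x ∂(cauchyMeasure 0 y) =
      ∫ ξ, H ξ * (Real.exp (-2 * π * y * s ξ) : ℂ) ∂ν := by
  unfold lineExt
  rw [integral_integral_swap]
  · congr 1; ext ξ
    rw [integral_const_mul, integral_eR_cauchy hy (hs0 ξ)]
  · have h1 : Integrable (fun p : ℝ × Ω => H p.2) ((cauchyMeasure 0 y).prod ν) := hH.comp_snd _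
    refine h1.mul_bdd (c := 1) ?_ ?_
    · exact (by fun_prop : Measurable fun p : ℝ × Ω => eR (p.1 * s p.2)).aestronglyMeasurable
    · exact ae_of_all _ fun p => by simp [norm_eR]

/-- The Poisson integral is multiplicative on powers of a function with nonnegative spectrum. -/
lemma integral_lineExt_pow [SigmaFinite ν] (hH : Integrable H ν) (hs : Measurable s)
    (hs0 : ∀ ξ, 0 ≤ s ξ) {y : ℝ≥0} (hy : y ≠ 0) (k : ℕ) :
    ∫ x, lineExt ν H s x ^ k ∂(cauchyMeasure 0 y) =
      (∫ x, lineExt ν H s x ∂(cauchyMeasure 0 y)) ^ k := by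
  -- Fubini: the power is a superposition over the `k`-fold product, with the frequencies added
  have e1 : ∀ x, lineExt ν H s x ^ k =
      lineExt (Measure.pi fun _ : Fin k => ν) (fun ξ => ∏ i, H (ξ i)) (fun ξ => ∑ i, s (ξ i)) x := by
    intro x
    have := integral_fintype_prod_eq_pow (μ := ν) (ι := Fin k) (fun ξ => H ξ * eR (x * s ξ))
    rw [Fintype.card_fin] at this
    rw [lineExt, ← this, lineExt]
    congr 1; ext ξ
    rw [Finset.prod_mul_distrib, eR_sum, Finset.mul_sum]
  simp_rw [e1]
  rw [integral_lineExt (Integrable.fintype_prod (fun _ => hH)) (by fun_prop)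
    (fun ξ => Finset.sum_nonneg fun i _ => hs0 _) hy, integral_lineExt hH hs hs0 hy]
  have := integral_fintype_prod_eq_pow (μ := ν) (ι := Fin k)
    (fun ξ => H ξ * (Real.exp (-2 * π * y * s ξ) : ℂ))
  rw [Fintype.card_fin] at this
  rw [← this]
  congr 1; ext ξ
  rw [Finset.prod_mul_distrib, Finset.mul_sum, Real.exp_sum]
  push_cast
  rfl

lemma integrable_lineExt_pow (hH : Integrable H ν) (hs : Measurable s)
    (μ : Measure ℝ) [IsFiniteMeasure μ] (k : ℕ) :
    Integrable (fun x => lineExt ν H s x ^ k) μ := by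
  refine Integrable.of_bound (C := (∫ ξ, ‖H ξ‖ ∂ν) ^ k)
    ((continuous_lineExt hH hs).pow k).aestronglyMeasurable (ae_of_all _ fun x => ?_)
  rw [norm_pow]
  exact pow_le_pow_left₀ (norm_nonneg _) (norm_lineExt_le x) k

lemma integral_lineExt_sub_pow [SigmaFinite ν] (hH : Integrable H ν) (hs : Measurable s)
    (hs0 : ∀ ξ, 0 ≤ s ξ) {y : ℝ≥0} (hy : y ≠ 0) (c : ℂ) (k : ℕ) :
    ∫ x, (lineExt ν H s x - c) ^ k ∂(cauchyMeasure 0 y) =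
      (∫ x, lineExt ν H s x ∂(cauchyMeasure 0 y) - c) ^ k := by
  simp_rw [sub_eq_add_neg, add_pow]
  rw [integral_finsetSum]
  · refine Finset.sum_congr rfl fun m _ => ?_
    rw [integral_mul_const, integral_mul_const, integral_lineExt_pow hH hs hs0 hy]
  · intro m _
    exact ((integrable_lineExt_pow hH hs _ m).mul_const _).mul_const _

/-- The elementary inequality behind Riesz's theorem for the exponent `12`: since `i ^ 12 = 1`, the
real part of `(u + iv) ^ 12` is `v ^ 12` up to terms that contain a factor `u ^ 2`. -/
lemma pow12_le (u v : ℝ) :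
    v ^ 12 ≤ 2 * (((u : ℂ) + v * Complex.I) ^ 12).re + 3 * 133 ^ 6 * u ^ 12 := by
  have hre : (((u : ℂ) + v * Complex.I) ^ 12).re = v ^ 12 - 66 * v ^ 10 * u ^ 2
      + 495 * v ^ 8 * u ^ 4 - 924 * v ^ 6 * u ^ 6 + 495 * v ^ 4 * u ^ 8
      - 66 * v ^ 2 * u ^ 10 + u ^ 12 := by
    have h : ((u : ℂ) + v * Complex.I) ^ 2 =
        ((u ^ 2 - v ^ 2 : ℝ) : ℂ) + (2 * u * v : ℝ) * Complex.I := by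
      push_cast; linear_combination (v : ℂ) ^ 2 * Complex.I_sq
    have h3 : ((u : ℂ) + v * Complex.I) ^ 12 =
        (((u ^ 2 - v ^ 2) ^ 6 - 15 * (u ^ 2 - v ^ 2) ^ 4 * (2 * u * v) ^ 2 +
          15 * (u ^ 2 - v ^ 2) ^ 2 * (2 * u * v) ^ 4 - (2 * u * v) ^ 6 : ℝ) : ℂ) +
        ((6 * (u ^ 2 - v ^ 2) ^ 5 * (2 * u * v) - 20 * (u ^ 2 - v ^ 2) ^ 3 * (2 * u * v) ^ 3 +
          6 * (u ^ 2 - v ^ 2) * (2 * u * v) ^ 5 : ℝ) : ℂ) * Complex.I := by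
      rw [show (12 : ℕ) = 2 * 6 from rfl, pow_mul, h]
      generalize u ^ 2 - v ^ 2 = a
      generalize 2 * u * v = b
      have i2 := Complex.I_sq
      have i3 : Complex.I ^ 3 = -Complex.I := by rw [pow_succ, i2]; ring
      have i4 : Complex.I ^ 4 = 1 := Complex.I_pow_four
      have i5 : Complex.I ^ 5 = Complex.I := by rw [pow_succ, i4]; ring
      have i6 : Complex.I ^ 6 = -1 := by rw [pow_succ, i5, ← sq, i2]
      push_cast
      ring_nf
      rw [i2, i3, i4, i5, i6]
      ring
    rw [h3]
    simp only [Complex.add_re, Complex.mul_re, Complex.ofReal_re, Complex.ofReal_im, Complex.I_re,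
      Complex.I_im]
    ring
  rw [hre]
  have hs : 0 ≤ u ^ 2 := sq_nonneg u
  have ht : 0 ≤ v ^ 2 := sq_nonneg v
  generalize hS : u ^ 2 = S at *
  generalize hT : v ^ 2 = T at *
  have key : 0 ≤ T ^ 6 - 132 * T ^ 5 * S + 990 * T ^ 4 * S ^ 2 - 1848 * T ^ 3 * S ^ 3
      + 990 * T ^ 2 * S ^ 4 - 132 * T * S ^ 5 + (3 * 133 ^ 6 + 2) * S ^ 6 := by
    -- If `132 S ≤ T`, each negative term is absorbed by the term before it. If `T ≤ 132 S`, each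
    -- negative term is at most a multiple of `S ^ 6`.
    rcases le_total (132 * S) T with h | h
    · have h1 : 0 ≤ T ^ 5 * (T - 132 * S) := mul_nonneg (by positivity) (by linarith)
      have h2 : 0 ≤ T ^ 3 * S ^ 2 * (T - 132 * S) := mul_nonneg (by positivity) (by linarith)
      have h3 : 0 ≤ T * S ^ 4 * (T - 132 * S) := mul_nonneg (by positivity) (by linarith)
      have h4 : 0 ≤ T ^ 3 * S ^ 3 := by positivity
      have h5 : 0 ≤ T * S ^ 5 := by positivity
      have h6 : 0 ≤ S ^ 6 := by positivity
      have h7 : 0 ≤ T ^ 4 * S ^ 2 := by positivity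
      have h8 : 0 ≤ T ^ 2 * S ^ 4 := by positivity
      nlinarith
    · have a3 : T ^ 3 ≤ (132 * S) ^ 3 := pow_le_pow_left₀ ht h 3
      have a5 : T ^ 5 ≤ (132 * S) ^ 5 := pow_le_pow_left₀ ht h 5
      have b3 := mul_le_mul_of_nonneg_right a3 (by positivity : 0 ≤ S ^ 3)
      have b5 := mul_le_mul_of_nonneg_right a5 hs
      have b1 := mul_le_mul_of_nonneg_right h (by positivity : 0 ≤ S ^ 5)
      have h6 : 0 ≤ S ^ 6 := by positivity
      have h7 : 0 ≤ T ^ 4 * S ^ 2 := by positivity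
      have h8 : 0 ≤ T ^ 2 * S ^ 4 := by positivity
      have h9 : 0 ≤ T ^ 6 := by positivity
      nlinarith
  have e : ∀ z : ℝ, z ^ 12 = (z ^ 2) ^ 6 ∧ z ^ 10 = (z ^ 2) ^ 5 ∧ z ^ 8 = (z ^ 2) ^ 4 ∧
    z ^ 6 = (z ^ 2) ^ 3 ∧ z ^ 4 = (z ^ 2) ^ 2 := by intro z; refine ⟨?_, ?_, ?_, ?_, ?_⟩ <;> ring
  obtain ⟨u1, u2, u3, u4, u5⟩ := e u
  obtain ⟨v1, v2, v3, v4, v5⟩ := e v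
  rw [u1, u2, u3, u4, u5, v1, v2, v3, v4, v5, hS, hT]
  linarith

/-- Riesz's inequality against the Poisson kernel: for `F` with nonnegative spectrum, the deviation
of `Im F` from its mean is bounded in `L¹²` by `Re F`. -/
lemma riesz_cauchy [SigmaFinite ν] (hH : Integrable H ν) (hs : Measurable s)
    (hs0 : ∀ ξ, 0 ≤ s ξ) {y : ℝ≥0} (hy : y ≠ 0) :
    ∫ x, ((lineExt ν H s x).im - (∫ t, lineExt ν H s t ∂(cauchyMeasure 0 y)).im) ^ 12
      ∂(cauchyMeasure 0 y) ≤
    (2 + 3 * 133 ^ 6) * ∫ x, (lineExt ν H s x).re ^ 12 ∂(cauchyMeasure 0 y) := by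
  set μ := cauchyMeasure 0 y with hμ
  set F := lineExt ν H s with hF
  set m := ∫ t, F t ∂μ with hm
  have hFc : Continuous F := continuous_lineExt hH hs
  have hb : ∀ x, ‖F x‖ ≤ ∫ ξ, ‖H ξ‖ ∂ν := norm_lineExt_le
  set B := ∫ ξ, ‖H ξ‖ ∂ν
  have hFi : Integrable F μ := by simpa using integrable_lineExt_pow hH hs μ 1
  have ire : Integrable (fun x => (F x).re ^ 12) μ := by
    refine Integrable.of_bound (C := B ^ 12) (by fun_prop) (ae_of_all _ fun x => ?_)
    rw [norm_pow]
    exact pow_le_pow_left₀ (norm_nonneg _) ((Complex.abs_re_le_norm _).trans (hb x)) 12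
  have iim : Integrable (fun x => ((F x).im - m.im) ^ 12) μ := by
    refine Integrable.of_bound (C := (B + |m.im|) ^ 12) (by fun_prop) (ae_of_all _ fun x => ?_)
    rw [norm_pow]
    refine pow_le_pow_left₀ (norm_nonneg _) ((norm_sub_le _ _).trans ?_) 12
    exact add_le_add ((Complex.abs_im_le_norm _).trans (hb x)) le_rfl
  have iG : Integrable (fun x => (F x - m.im * Complex.I) ^ 12) μ := by
    refine Integrable.of_bound (C := (B + |m.im|) ^ 12) (by fun_prop) (ae_of_all _ fun x => ?_)
    rw [norm_pow]
    refine pow_le_pow_left₀ (norm_nonneg _) ((norm_sub_le _ _).trans ?_) 12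
    exact add_le_add (hb x) (by simp)
  have iGre : Integrable (fun x => ((F x - m.im * Complex.I) ^ 12).re) μ := iG.re
  -- by multiplicativity; subtracting `i Im m` has made the mean real
  have hG : ∫ x, ((F x - m.im * Complex.I) ^ 12).re ∂μ = m.re ^ 12 := by
    have h1 : ∫ x, ((F x - m.im * Complex.I) ^ 12).re ∂μ =
      (∫ x, (F x - m.im * Complex.I) ^ 12 ∂μ).re := integral_re iG
    rw [h1, integral_lineExt_sub_pow hH hs hs0 hy]
    rw [← hF, ← hμ, ← hm, show m - m.im * Complex.I = (m.re : ℂ) by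
      apply Complex.ext <;> simp]
    norm_cast
  have hmre : m.re = ∫ x, (F x).re ∂μ := (integral_re hFi).symm
  have jensen : m.re ^ 12 ≤ ∫ x, (F x).re ^ 12 ∂μ := by
    rw [hmre]
    exact ConvexOn.map_integral_le (g := fun t : ℝ => t ^ 12)
      (Even.convexOn_pow (n := 12) (by decide)) (by fun_prop) isClosed_univ
      (ae_of_all _ fun _ => Set.mem_univ _) hFi.re ire
  calc ∫ x, ((F x).im - m.im) ^ 12 ∂μ
      ≤ ∫ x, (2 * ((F x - m.im * Complex.I) ^ 12).re + 3 * 133 ^ 6 * (F x).re ^ 12) ∂μ := by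
        refine integral_mono iim ((iGre.const_mul 2).add (ire.const_mul _)) fun x => ?_
        have := pow12_le (F x).re ((F x).im - m.im)
        have e : ((F x).re : ℂ) + ((F x).im - m.im : ℝ) * Complex.I = F x - m.im * Complex.I := by
          apply Complex.ext <;> simp
        rw [e] at this
        exact this
    _ = 2 * m.re ^ 12 + 3 * 133 ^ 6 * ∫ x, (F x).re ^ 12 ∂μ := by
        rw [integral_add (iGre.const_mul 2) (ire.const_mul _), integral_const_mul,
          integral_const_mul, hG]
    _ ≤ _ := by linarith

lemma lintegral_cauchy_weight {y : ℝ≥0} (hy : y ≠ 0) {φ : ℝ → ℝ} (hφ : Continuous φ) :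
    ∫⁻ x, ENNReal.ofReal (y ^ 2 / (x ^ 2 + y ^ 2) * φ x) =
      ENNReal.ofReal (π * y) * ∫⁻ x, ENNReal.ofReal (φ x) ∂(cauchyMeasure 0 y) := by
  have hy' : (0 : ℝ) < y := by positivity
  rw [cauchyMeasure_of_scale_ne_zero 0 hy, lintegral_withDensity_eq_lintegral_mul _ (by fun_prop)
    (by fun_prop), ← lintegral_const_mul _ (by fun_prop)]
  refine lintegral_congr fun x => ?_
  rw [Pi.mul_apply, cauchyPDF_def, cauchyPDFReal_def, sub_zero,
    ← ENNReal.ofReal_mul (by positivity), ← ENNReal.ofReal_mul (by positivity)]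
  congr 1
  field_simp

/-- Riesz's inequality on the line: for `F` with nonnegative spectrum, `Im F` is bounded in `L¹²` by
`Re F`. No mean has to be subtracted because the frequency `0` is `ν`-null. -/
lemma riesz_line [SigmaFinite ν] (hH : Integrable H ν) (hs : Measurable s)
    (hs0 : ∀ ξ, 0 ≤ s ξ) (hne : ∀ᵐ ξ ∂ν, s ξ ≠ 0) :
    ∫⁻ x, ENNReal.ofReal ((lineExt ν H s x).im ^ 12) ≤
      ENNReal.ofReal (2 + 3 * 133 ^ 6) * ∫⁻ x, ENNReal.ofReal ((lineExt ν H s x).re ^ 12) := by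
  set F := lineExt ν H s with hF
  have hFc : Continuous F := continuous_lineExt hH hs
  have hb : ∀ x, ‖F x‖ ≤ ∫ ξ, ‖H ξ‖ ∂ν := norm_lineExt_le
  set B := ∫ ξ, ‖H ξ‖ ∂ν
  let y : ℕ → ℝ≥0 := fun n => n + 1
  have hy : ∀ n, y n ≠ 0 := fun n => by positivity
  have hyc : ∀ n, (y n : ℝ) = n + 1 := fun n => by simp [y]
  have hytop : Tendsto (fun n => (y n : ℝ)) atTop atTop := by
    simp_rw [hyc]
    exact tendsto_atTop_add_const_right _ _ tendsto_natCast_atTop_atTop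
  let c : ℕ → ℝ := fun n => (∫ t, F t ∂(cauchyMeasure 0 (y n))).im
  -- the mean is `∫ H exp (-2πys) dν`, which tends to `0` since `s > 0` almost everywhere
  have hc : Tendsto c atTop (𝓝 0) := by
    have h1 : Tendsto (fun n => ∫ t, F t ∂(cauchyMeasure 0 (y n))) atTop (𝓝 (∫ _, (0 : ℂ) ∂ν)) := by
      simp_rw [hF, integral_lineExt hH hs hs0 (hy _)]
      refine tendsto_integral_of_dominated_convergence (fun ξ => ‖H ξ‖) ?_ hH.norm ?_ ?_
      · intro n
        exact hH.aestronglyMeasurable.mul (by fun_prop : Measurable _).aestronglyMeasurable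
      · intro n
        refine ae_of_all _ fun ξ => ?_
        rw [norm_mul, Complex.norm_real, Real.norm_of_nonneg (Real.exp_nonneg _)]
        refine mul_le_of_le_one_right (norm_nonneg _) (Real.exp_le_one_iff.2 ?_)
        have := mul_nonneg (mul_nonneg Real.pi_pos.le (y n).coe_nonneg) (hs0 ξ)
        nlinarith [this]
      · filter_upwards [hne] with ξ hξ
        have hpos : 0 < 2 * π * s ξ := by
          have := lt_of_le_of_ne (hs0 ξ) (Ne.symm hξ)
          positivity
        have h2 : Tendsto (fun n => Real.exp (-2 * π * y n * s ξ)) atTop (𝓝 0) := by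
          refine Real.tendsto_exp_atBot.comp ?_
          have := (hytop.const_mul_atTop hpos)
          refine (tendsto_neg_atTop_atBot.comp this).congr fun n => ?_
          simp; ring
        have h3 := ((Complex.continuous_ofReal.tendsto _).comp h2).const_mul (H ξ)
        simpa using h3
    rw [integral_zero] at h1
    exact (Complex.continuous_im.tendsto _).comp h1
  -- `π y` times the Cauchy density is `y² / (x² + y²)`, which increases to `1`
  have hbound : ∀ n, ∫⁻ x, ENNReal.ofReal ((y n : ℝ) ^ 2 / (x ^ 2 + (y n : ℝ) ^ 2) *
      ((F x).im - c n) ^ 12) ≤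
      ENNReal.ofReal (2 + 3 * 133 ^ 6) * ∫⁻ x, ENNReal.ofReal ((F x).re ^ 12) := by
    intro n
    have hyn : (0 : ℝ) < y n := by rw [hyc]; positivity
    set μ := cauchyMeasure 0 (y n)
    have ire : Integrable (fun x => (F x).re ^ 12) μ := by
      refine Integrable.of_bound (C := B ^ 12) (by fun_prop) (ae_of_all _ fun x => ?_)
      rw [norm_pow]
      exact pow_le_pow_left₀ (norm_nonneg _) ((Complex.abs_re_le_norm _).trans (hb x)) 12
    have iim : Integrable (fun x => ((F x).im - c n) ^ 12) μ := by
      refine Integrable.of_bound (C := (B + |c n|) ^ 12) (by fun_prop) (ae_of_all _ fun x => ?_)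
      rw [norm_pow]
      refine pow_le_pow_left₀ (norm_nonneg _) ((norm_sub_le _ _).trans ?_) 12
      exact add_le_add ((Complex.abs_im_le_norm _).trans (hb x)) le_rfl
    have hr := ENNReal.ofReal_le_ofReal (riesz_cauchy hH hs hs0 (hy n))
    rw [ENNReal.ofReal_mul (by positivity),
      ofReal_integral_eq_lintegral_ofReal iim (ae_of_all _ fun x => by positivity),
      ofReal_integral_eq_lintegral_ofReal ire (ae_of_all _ fun x => by positivity)] at hr
    rw [lintegral_cauchy_weight (hy n) (by fun_prop)]
    calc _ ≤ ENNReal.ofReal (π * y n) * (ENNReal.ofReal (2 + 3 * 133 ^ 6) *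
          ∫⁻ x, ENNReal.ofReal ((F x).re ^ 12) ∂μ) := by gcongr
      _ = ENNReal.ofReal (2 + 3 * 133 ^ 6) * ∫⁻ x, ENNReal.ofReal
            ((y n : ℝ) ^ 2 / (x ^ 2 + (y n : ℝ) ^ 2) * (F x).re ^ 12) := by
          rw [lintegral_cauchy_weight (hy n) (φ := fun x => (F x).re ^ 12) (by fun_prop)]; ring
      _ ≤ _ := by
          gcongr with x
          refine mul_le_of_le_one_left (by positivity) ?_
          rw [div_le_one (by positivity)]
          nlinarith [sq_nonneg x]
  have hlim : ∀ x, Tendsto (fun n => ENNReal.ofReal ((y n : ℝ) ^ 2 / (x ^ 2 + (y n : ℝ) ^ 2) *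
      ((F x).im - c n) ^ 12)) atTop (𝓝 (ENNReal.ofReal ((F x).im ^ 12))) := by
    intro x
    refine (ENNReal.continuous_ofReal.tendsto _).comp ?_
    have h1 : Tendsto (fun n => (y n : ℝ) ^ 2 / (x ^ 2 + (y n : ℝ) ^ 2)) atTop (𝓝 1) := by
      have h2 : Tendsto (fun n => 1 - x ^ 2 / (x ^ 2 + (y n : ℝ) ^ 2)) atTop (𝓝 (1 - 0)) := by
        refine tendsto_const_nhds.sub (tendsto_const_nhds.div_atTop ?_)
        exact tendsto_atTop_add_const_left _ _ ((tendsto_pow_atTop two_ne_zero).comp hytop)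
      rw [sub_zero] at h2
      refine h2.congr fun n => ?_
      have hyn : (0 : ℝ) < y n := by rw [hyc]; positivity
      have : x ^ 2 + (y n : ℝ) ^ 2 ≠ 0 := by positivity
      field_simp; ring
    have h3 := h1.mul (((tendsto_const_nhds (x := (F x).im)).sub hc).pow 12)
    simpa using h3
  calc ∫⁻ x, ENNReal.ofReal ((F x).im ^ 12)
      = ∫⁻ x, liminf (fun n => ENNReal.ofReal ((y n : ℝ) ^ 2 / (x ^ 2 + (y n : ℝ) ^ 2) *
          ((F x).im - c n) ^ 12)) atTop := lintegral_congr fun x => (hlim x).liminf_eq.symm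
    _ ≤ liminf (fun n => ∫⁻ x, ENNReal.ofReal ((y n : ℝ) ^ 2 / (x ^ 2 + (y n : ℝ) ^ 2) *
          ((F x).im - c n) ^ 12)) atTop :=
        lintegral_liminf_le fun n => by fun_prop
    _ ≤ liminf (fun _ : ℕ => ENNReal.ofReal (2 + 3 * 133 ^ 6) *
          ∫⁻ x, ENNReal.ofReal ((F x).re ^ 12)) atTop :=
        liminf_le_liminf (Eventually.of_forall hbound)
    _ = _ := liminf_const _

end line

/-! ### Sharp frequency truncation -/

/-- A constant for the boundedness of sharp frequency truncation on `L¹²`: the constant of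
`riesz_line` for the imaginary part, `1` for the real part, and the factor `2 ^ 12` from comparing
`‖z‖ ^ 12` with the two parts and adding two such bounds. -/
def truncC : ℝ≥0∞ := ENNReal.ofReal (2 ^ 12 * (1 + (2 + 3 * 133 ^ 6)))

lemma truncC_lt_top : truncC < ∞ := ENNReal.ofReal_lt_top

lemma norm_pow12_le (z : ℂ) : ‖z‖ ^ 12 ≤ 2 ^ 11 * (z.re ^ 12 + z.im ^ 12) := by
  have h := pow_le_pow_left₀ (norm_nonneg _) (Complex.norm_le_abs_re_add_abs_im z) 12
  have h2 := add_pow_le (abs_nonneg z.re) (abs_nonneg z.im) 12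
  have e : ∀ t : ℝ, |t| ^ 12 = t ^ 12 := fun t => by
    rw [← abs_pow, abs_of_nonneg (by positivity)]
  rw [e, e] at h2
  simpa using h.trans h2

/-- Restricting the frequencies to `(-∞, a]` is bounded on `L¹²(ℝ)`. The right-hand side may be
infinite. -/
lemma trunc_line {h : ℝ → ℂ} {ν : Measure ℝ} [SigmaFinite ν] [NullSingletonClass ν]
    (hh : Integrable h ν) (a : ℝ) :
    ∫⁻ x, ENNReal.ofReal (‖∫ ξ in Set.Iic a, h ξ * eR (x * ξ) ∂ν‖ ^ 12) ≤
      truncC * ∫⁻ x, ENNReal.ofReal (‖∫ ξ, h ξ * eR (x * ξ) ∂ν‖ ^ 12) := by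
  set s : ℝ → ℝ := fun ξ => |ξ - a| with hs_def
  have hs : Measurable s := by fun_prop
  have hs0 : ∀ ξ, 0 ≤ s ξ := fun ξ => abs_nonneg _
  have hne : ∀ᵐ ξ ∂ν, s ξ ≠ 0 := by
    have : ∀ᵐ ξ ∂ν, ξ ≠ a := by simp [ae_iff]
    filter_upwards [this] with ξ hξ
    simpa [hs_def, sub_eq_zero] using hξ
  -- Reflect the frequencies below `a` and conjugate their amplitudes. After modulation by `-a` the
  -- spectrum is nonnegative, and the real part is that of `c` times the modulated function.
  let fold : ℂ → ℝ → ℂ := fun c => fun ξ =>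
    if ξ ≤ a then (starRingEnd ℂ) (c * h ξ) else c * h ξ
  have hfold : ∀ c, Integrable (fold c) ν := by
    intro c
    have h1 : Integrable (fun ξ => c * h ξ) ν := hh.const_mul c
    have h2 : Integrable (fun ξ => (starRingEnd ℂ) (c * h ξ)) ν :=
      (LinearIsometryEquiv.integrable_comp_iff (L := Complex.conjLIE)).2 h1
    exact Integrable.piecewise (s := Set.Iic a) measurableSet_Iic h2.integrableOn h1.integrableOn
  set P : ℝ → ℂ := fun x => ∫ ξ in Set.Iic a, h ξ * eR (x * ξ) ∂ν with hP
  set Q : ℝ → ℂ := fun x => ∫ ξ in (Set.Iic a)ᶜ, h ξ * eR (x * ξ) ∂ν with hQ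
  set f : ℝ → ℂ := fun x => ∫ ξ, h ξ * eR (x * ξ) ∂ν with hf
  have hint : ∀ x, Integrable (fun ξ => h ξ * eR (x * ξ)) ν := fun x =>
    hh.mul_bdd (c := 1) (by fun_prop : Measurable _).aestronglyMeasurable
      (ae_of_all _ fun ξ => by simp [norm_eR])
  have hPQ : ∀ x, P x + Q x = f x := fun x =>
    integral_add_compl measurableSet_Iic (hint x)
  have hF : ∀ c x, lineExt ν (fold c) s x =
      (starRingEnd ℂ) (c * (eR (-(x * a)) * P x)) + c * (eR (-(x * a)) * Q x) := by
    intro c x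
    have hi : Integrable (fun ξ => fold c ξ * eR (x * s ξ)) ν :=
      (hfold c).mul_bdd (c := 1) (by fun_prop : Measurable _).aestronglyMeasurable
        (ae_of_all _ fun ξ => by simp [norm_eR])
    rw [lineExt, ← integral_add_compl (measurableSet_Iic (a := a)) hi]
    congr 1
    · rw [hP, ← integral_const_mul, ← integral_const_mul, ← integral_conj]
      refine setIntegral_congr_fun measurableSet_Iic fun ξ hξ => ?_
      have hξ' : ξ ≤ a := hξ
      simp only [fold, if_pos hξ', hs_def, abs_of_nonpos (sub_nonpos.2 hξ'), map_mul, conj_eR]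
      rw [show x * -(ξ - a) = -(-(x * a)) + -(x * ξ) by ring, eR_add]
      ring
    · rw [hQ, ← integral_const_mul, ← integral_const_mul]
      refine setIntegral_congr_fun measurableSet_Iic.compl fun ξ hξ => ?_
      have hξ' : ¬ ξ ≤ a := hξ
      simp only [fold, if_neg hξ', hs_def, abs_of_pos (sub_pos.2 (not_le.1 hξ'))]
      rw [show x * (ξ - a) = -(x * a) + (x * ξ) by ring, eR_add]
      ring
  have hre : ∀ c : ℂ, ‖c‖ = 1 → ∀ x, (lineExt ν (fold c) s x).re ^ 12 ≤ ‖f x‖ ^ 12 := by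
    intro c hc x
    have e1 : (lineExt ν (fold c) s x).re = (c * (eR (-(x * a)) * f x)).re := by
      rw [hF, Complex.add_re, Complex.conj_re, ← Complex.add_re, ← hPQ]
      congr 1; ring
    rw [e1]
    have : |(c * (eR (-(x * a)) * f x)).re| ≤ ‖f x‖ :=
      (Complex.abs_re_le_norm _).trans (by rw [norm_mul, norm_mul, hc, norm_eR]; simp)
    calc _ = |(c * (eR (-(x * a)) * f x)).re| ^ 12 := by
          rw [← abs_pow, abs_of_nonneg (by positivity)]
      _ ≤ _ := pow_le_pow_left₀ (abs_nonneg _) this 12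
  have hline : ∀ c : ℂ, ‖c‖ = 1 →
      ∫⁻ x, ENNReal.ofReal (‖lineExt ν (fold c) s x‖ ^ 12) ≤
        ENNReal.ofReal (2 ^ 11 * (1 + (2 + 3 * 133 ^ 6))) * ∫⁻ x, ENNReal.ofReal (‖f x‖ ^ 12) := by
    intro c hc
    have hcont : Continuous (lineExt ν (fold c) s) := continuous_lineExt (hfold c) hs
    have h1 : ∫⁻ x, ENNReal.ofReal ((lineExt ν (fold c) s x).re ^ 12) ≤
        ∫⁻ x, ENNReal.ofReal (‖f x‖ ^ 12) :=
      lintegral_mono fun x => ENNReal.ofReal_le_ofReal (hre c hc x)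
    have h2 := riesz_line (hfold c) hs hs0 hne
    calc _ ≤ ∫⁻ x, (ENNReal.ofReal (2 ^ 11) * (ENNReal.ofReal ((lineExt ν (fold c) s x).re ^ 12) +
            ENNReal.ofReal ((lineExt ν (fold c) s x).im ^ 12))) := by
          refine lintegral_mono fun x => ?_
          rw [← ENNReal.ofReal_add (by positivity) (by positivity),
            ← ENNReal.ofReal_mul (by positivity)]
          exact ENNReal.ofReal_le_ofReal (norm_pow12_le _)
      _ = ENNReal.ofReal (2 ^ 11) * ((∫⁻ x, ENNReal.ofReal ((lineExt ν (fold c) s x).re ^ 12)) +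
            ∫⁻ x, ENNReal.ofReal ((lineExt ν (fold c) s x).im ^ 12)) := by
          rw [lintegral_const_mul _ (by fun_prop), lintegral_add_left (by fun_prop)]
      _ ≤ ENNReal.ofReal (2 ^ 11) * ((∫⁻ x, ENNReal.ofReal (‖f x‖ ^ 12)) +
            ENNReal.ofReal (2 + 3 * 133 ^ 6) * ∫⁻ x, ENNReal.ofReal (‖f x‖ ^ 12)) := by
          have h3 := h2.trans (mul_le_mul_right h1 _)
          gcongr
      _ = _ := by
          rw [ENNReal.ofReal_mul (by positivity), ENNReal.ofReal_add zero_le_one (by positivity),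
            ENNReal.ofReal_one]
          ring
  -- the choices `c = 1` and `c = -i` together recover the low-frequency part `P`
  have hPle : ∀ x, ‖P x‖ ^ 12 ≤ ‖lineExt ν (fold 1) s x‖ ^ 12 +
      ‖lineExt ν (fold (-Complex.I)) s x‖ ^ 12 := by
    intro x
    have e : 2 * (starRingEnd ℂ) (eR (-(x * a)) * P x) = lineExt ν (fold 1) s x -
        Complex.I * lineExt ν (fold (-Complex.I)) s x := by
      rw [hF, hF]
      simp only [map_mul, map_neg, Complex.conj_I, map_one]
      linear_combination (((starRingEnd ℂ) (eR (-(x * a))) * (starRingEnd ℂ) (P x)) -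
        eR (-(x * a)) * Q x) * Complex.I_sq
    have hn : 2 * ‖P x‖ ≤ ‖lineExt ν (fold 1) s x‖ + ‖lineExt ν (fold (-Complex.I)) s x‖ := by
      have := congrArg norm e
      rw [norm_mul, RCLike.norm_conj, norm_mul, norm_eR, one_mul] at this
      rw [show ‖(2 : ℂ)‖ = 2 by simp] at this
      rw [this]
      exact (norm_sub_le _ _).trans (by simp)
    have h0 := norm_nonneg (P x)
    rcases le_total ‖lineExt ν (fold 1) s x‖ ‖lineExt ν (fold (-Complex.I)) s x‖ with hl | hl
    · have : ‖P x‖ ≤ ‖lineExt ν (fold (-Complex.I)) s x‖ := by linarith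
      have := pow_le_pow_left₀ h0 this 12
      have : 0 ≤ ‖lineExt ν (fold 1) s x‖ ^ 12 := by positivity
      linarith
    · have : ‖P x‖ ≤ ‖lineExt ν (fold 1) s x‖ := by linarith
      have := pow_le_pow_left₀ h0 this 12
      have : 0 ≤ ‖lineExt ν (fold (-Complex.I)) s x‖ ^ 12 := by positivity
      linarith
  have hcont : Continuous (lineExt ν (fold 1) s) := continuous_lineExt (hfold _) hs
  calc ∫⁻ x, ENNReal.ofReal (‖P x‖ ^ 12)
      ≤ ∫⁻ x, (ENNReal.ofReal (‖lineExt ν (fold 1) s x‖ ^ 12) +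
          ENNReal.ofReal (‖lineExt ν (fold (-Complex.I)) s x‖ ^ 12)) := by
        refine lintegral_mono fun x => ?_
        rw [← ENNReal.ofReal_add (by positivity) (by positivity)]
        exact ENNReal.ofReal_le_ofReal (hPle x)
    _ = _ := lintegral_add_left (by fun_prop) _
    _ ≤ _ := add_le_add (hline 1 (by simp)) (hline (-Complex.I) (by simp))
    _ = _ := by
        rw [truncC, ← add_mul, ← ENNReal.ofReal_add (by positivity) (by positivity)]
        congr 2
        norm_num

/-! ### A crude decoupling inequality on `ℝ³` -/

lemma continuous_momPhase {ν : Measure ℝ} {g : ℝ → ℂ} (hg : Integrable g ν) :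
    Continuous fun x : E3 => ∫ ξ, g ξ * eR (x 0 * ξ + x 1 * ξ ^ 2 + x 2 * ξ ^ 3) ∂ν := by
  refine continuous_of_dominated (bound := fun ξ => ‖g ξ‖) ?_ ?_ hg.norm ?_
  · intro x
    exact hg.aestronglyMeasurable.mul (by fun_prop : Measurable _).aestronglyMeasurable
  · intro x
    exact ae_of_all _ fun ξ => by simp [norm_eR]
  · exact ae_of_all _ fun ξ => by fun_prop

lemma lintegral_E3 {φ : E3 → ℝ≥0∞} (hφ : Measurable φ) :
    ∫⁻ x, φ x = ∫⁻ z : Fin 2 → ℝ, ∫⁻ t : ℝ, φ (Fin.cons t z) := by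
  have hmp := (volume_preserving_piFinSuccAbove (fun _ : Fin 3 => ℝ) 0).symm
  rw [← hmp.lintegral_comp_emb (MeasurableEquiv.measurableEmbedding _)]
  rw [Measure.volume_eq_prod, lintegral_prod_symm]
  · simp [MeasurableEquiv.piFinSuccAbove, Fin.insertNthEquiv]
  · exact (hφ.comp (MeasurableEquiv.measurable _)).aemeasurable

/-- Restricting `ξ` to `(-∞, a]` is bounded on `L¹²(ℝ³)`: for fixed `x₁` and `x₂` this is a
frequency truncation in `x₀`, the other phases being part of the amplitude. -/
lemma trunc_E3 {ν : Measure ℝ} [SigmaFinite ν] [NullSingletonClass ν] {g : ℝ → ℂ}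
    (hg : Integrable g ν) (a : ℝ) :
    ∫⁻ x : E3, ENNReal.ofReal
        (‖∫ ξ in Set.Iic a, g ξ * eR (x 0 * ξ + x 1 * ξ ^ 2 + x 2 * ξ ^ 3) ∂ν‖ ^ 12) ≤
      truncC * ∫⁻ x : E3, ENNReal.ofReal
        (‖∫ ξ, g ξ * eR (x 0 * ξ + x 1 * ξ ^ 2 + x 2 * ξ ^ 3) ∂ν‖ ^ 12) := by
  have hm : ∀ ν' : Measure ℝ, Integrable g ν' → Measurable fun x : E3 => ENNReal.ofReal
        (‖∫ ξ, g ξ * eR (x 0 * ξ + x 1 * ξ ^ 2 + x 2 * ξ ^ 3) ∂ν'‖ ^ 12) := fun ν' h =>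
    (ENNReal.continuous_ofReal.comp ((continuous_momPhase h).norm.pow 12)).measurable
  rw [lintegral_E3 (hm _ hg.restrict), lintegral_E3 (hm _ hg),
    ← lintegral_const_mul' _ _ truncC_lt_top.ne]
  refine lintegral_mono fun z => ?_
  have hh : Integrable (fun ξ => g ξ * eR (z 0 * ξ ^ 2 + z 1 * ξ ^ 3)) ν :=
    hg.mul_bdd (c := 1) (by fun_prop : Measurable _).aestronglyMeasurable
      (ae_of_all _ fun ξ => by simp [norm_eR])
  have key := trunc_line hh a
  have e : ∀ t ξ : ℝ, g ξ * eR ((Fin.cons t z : E3) 0 * ξ + (Fin.cons t z : E3) 1 * ξ ^ 2 +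
      (Fin.cons t z : E3) 2 * ξ ^ 3) = g ξ * eR (z 0 * ξ ^ 2 + z 1 * ξ ^ 3) * eR (t * ξ) := by
    intro t ξ
    rw [mul_assoc, ← eR_add]
    congr 2
    change t * ξ + z 0 * ξ ^ 2 + z 1 * ξ ^ 3 = _
    ring
  simp_rw [e]
  exact key

lemma momExt_eq_restrict (g : ℝ → ℂ) {a : ℝ} (ha : 0 ≤ a) (ha1 : a ≤ 1) (x : E3) :
    momExt g 0 a x = ∫ ξ in Set.Iic a, g ξ * eR (x 0 * ξ + x 1 * ξ ^ 2 + x 2 * ξ ^ 3)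
      ∂(volume.restrict (Set.Ioc 0 1)) := by
  rw [momExt, intervalIntegral.integral_of_le ha, Measure.restrict_restrict measurableSet_Iic]
  congr 2
  ext t
  simp only [Set.mem_Ioc, Set.mem_inter_iff, Set.mem_Iic]
  constructor
  · rintro ⟨h1, h2⟩; exact ⟨h2, h1, h2.trans ha1⟩
  · rintro ⟨h1, h2, _⟩; exact ⟨h2, h1⟩

lemma momExt_one_eq (g : ℝ → ℂ) (x : E3) :
    momExt g 0 1 x = ∫ ξ, g ξ * eR (x 0 * ξ + x 1 * ξ ^ 2 + x 2 * ξ ^ 3)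
      ∂(volume.restrict (Set.Ioc 0 1)) := by
  rw [momExt, intervalIntegral.integral_of_le zero_le_one]

lemma memLp12_iff {f : E3 → ℂ} (hf : Continuous f) :
    MemLp f 12 volume ↔ ∫⁻ x, ENNReal.ofReal (‖f x‖ ^ 12) < ∞ := by
  have e : ∀ x, ENNReal.ofReal (‖f x‖ ^ 12) = ‖f x‖ₑ ^ (12 : ℝ≥0∞).toReal := by
    intro x
    rw [ENNReal.ofReal_pow (norm_nonneg _), ofReal_norm]
    simp only [ENNReal.toReal_ofNat]
    norm_cast
  simp_rw [e]
  rw [← eLpNorm_lt_top_iff_lintegral_rpow_enorm_lt_top (by norm_num) (by norm_num)]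
  exact ⟨fun h => h.2, fun h => ⟨hf.aestronglyMeasurable, h⟩⟩

lemma L12_nonneg (f : E3 → ℂ) : 0 ≤ L12 f :=
  Real.rpow_nonneg (integral_nonneg fun _ => by positivity) _

lemma L12_eq_toReal {f : E3 → ℂ} (hf : MemLp f 12 volume) :
    L12 f = (eLpNorm f 12 volume).toReal := by
  rw [hf.eLpNorm_eq_integral_rpow_norm (by norm_num) (by norm_num), ENNReal.toReal_ofReal]
  · simp only [ENNReal.toReal_ofNat, L12, one_div]
    norm_cast
  · positivity

lemma L12_eq_zero {f : E3 → ℂ} (hc : Continuous f) (hf : ¬ MemLp f 12 volume) : L12 f = 0 := by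
  have h : ¬ Integrable (fun x => ‖f x‖ ^ 12) := by
    intro h
    apply hf
    rw [← integrable_norm_rpow_iff hc.aestronglyMeasurable (by norm_num) (by norm_num)]
    refine h.congr (ae_of_all _ fun x => ?_)
    simp only [ENNReal.toReal_ofNat]
    norm_cast
  rw [L12, integral_undef h]
  exact Real.zero_rpow (by norm_num)

lemma continuous_momExt_one {g : ℝ → ℂ} (hg : IntegrableOn g (Set.Ioc 0 1)) :
    Continuous (momExt g 0 1) := by
  rw [funext (momExt_one_eq g)]
  exact continuous_momPhase hg

lemma memLp_momExt {g : ℝ → ℂ} (hg : IntegrableOn g (Set.Ioc 0 1))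
    (hf : MemLp (momExt g 0 1) 12 volume) {a : ℝ} (ha : 0 ≤ a) (ha1 : a ≤ 1) :
    MemLp (momExt g 0 a) 12 volume := by
  have hc : Continuous (momExt g 0 a) := by
    rw [funext (momExt_eq_restrict g ha ha1)]
    exact continuous_momPhase (Integrable.restrict (μ := volume.restrict (Set.Ioc 0 1)) hg)
  rw [memLp12_iff hc]
  rw [memLp12_iff (continuous_momExt_one hg)] at hf
  simp_rw [momExt_eq_restrict g ha ha1]
  simp_rw [momExt_one_eq] at hf
  exact (trunc_E3 hg a).trans_lt (ENNReal.mul_lt_top truncC_lt_top hf)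

lemma intervalIntegrable_momPhase {g : ℝ → ℂ} (hg : IntegrableOn g (Set.Ioc 0 1)) (x : E3)
    {a b : ℝ} (ha : a ∈ Set.Icc (0 : ℝ) 1) (hb : b ∈ Set.Icc (0 : ℝ) 1) :
    IntervalIntegrable (fun ξ => g ξ * eR (x 0 * ξ + x 1 * ξ ^ 2 + x 2 * ξ ^ 3)) volume a b := by
  have h : IntervalIntegrable (fun ξ => g ξ * eR (x 0 * ξ + x 1 * ξ ^ 2 + x 2 * ξ ^ 3))
      volume 0 1 := by
    rw [intervalIntegrable_iff_integrableOn_Ioc_of_le zero_le_one]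
    exact Integrable.mul_bdd (c := 1) hg (by fun_prop : Measurable _).aestronglyMeasurable
      (ae_of_all _ fun ξ => by simp [norm_eR])
  refine h.mono_set ?_
  rw [Set.uIcc_of_le (zero_le_one' ℝ)]
  exact Set.uIcc_subset_Icc ha hb

/-- Decoupling with constant `N` for the partition of `[0,1]` into `N` intervals, for every `g`,
integrable or not. It is the reason why the infimum in `Dconst` is over a nonempty set. -/
lemma crude_decoupling {N : ℕ} {d : ℝ} (hd : 0 ≤ d) (hN : N * d = 1) (g : ℝ → ℂ) :
    L12 (momExt g 0 1) ≤ N * decSum g 0 d N ^ ((1 : ℝ) / 4) := by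
  have hdec : 0 ≤ decSum g 0 d N := Finset.sum_nonneg fun k _ => by positivity
  have hr : 0 ≤ (N : ℝ) * decSum g 0 d N ^ ((1 : ℝ) / 4) := by positivity
  -- if `g` is not integrable, neither is any `g e(x · γ)`, and `E g` vanishes identically
  by_cases hg : IntegrableOn g (Set.Ioc 0 1)
  swap
  · have hz : momExt g 0 1 = fun _ => 0 := by
      ext x
      rw [momExt_one_eq]
      apply integral_undef
      intro h
      apply hg
      have := h.mul_bdd (c := 1) (g := fun ξ => eR (-(x 0 * ξ + x 1 * ξ ^ 2 + x 2 * ξ ^ 3)))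
        (by fun_prop : Measurable _).aestronglyMeasurable (ae_of_all _ fun ξ => by simp [norm_eR])
      refine Integrable.congr this (ae_of_all _ fun ξ => ?_)
      simp only [mul_assoc, ← eR_add, add_neg_cancel, eR_zero, mul_one]
    rw [hz]
    refine le_trans (le_of_eq ?_) hr
    simp [L12]
  -- if `E g ∉ L¹²`, the integral defining `L12` diverges and `L12` is `0`
  by_cases hf : MemLp (momExt g 0 1) 12 volume
  swap
  · rwa [L12_eq_zero (continuous_momExt_one hg) hf]
  have hmem : ∀ k : ℕ, k ≤ N → (k : ℝ) * d ∈ Set.Icc (0 : ℝ) 1 := by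
    intro k hk
    refine ⟨by positivity, ?_⟩
    rw [← hN]; gcongr
  have h0 : (0 : ℝ) ∈ Set.Icc (0 : ℝ) 1 := by simp
  set G : ℕ → E3 → ℂ := fun k => momExt g (0 + k * d) (0 + (k + 1) * d) with hG
  have hsucc : ∀ k < N, ((k : ℝ) + 1) * d ∈ Set.Icc (0 : ℝ) 1 := fun k hk => by
    have := hmem (k + 1) hk
    push_cast at this; exact this
  have hGmem : ∀ k ∈ Finset.range N, MemLp (G k) 12 volume := by
    intro k hk
    have hk := Finset.mem_range.1 hk
    have h1 := hmem k hk.le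
    have h2 := hsucc k hk
    have : G k = momExt g 0 ((k + 1) * d) - momExt g 0 (k * d) := by
      ext x
      simp only [hG, momExt, zero_add, Pi.sub_apply]
      exact (intervalIntegral.integral_interval_sub_left
        (intervalIntegrable_momPhase hg x h0 h2) (intervalIntegrable_momPhase hg x h0 h1)).symm
    rw [this]
    exact (memLp_momExt hg hf h2.1 h2.2).sub (memLp_momExt hg hf h1.1 h1.2)
  have hsum : momExt g 0 1 = ∑ k ∈ Finset.range N, G k := by
    ext x
    have := intervalIntegral.sum_integral_adjacent_intervals (n := N) (a := fun k : ℕ => (k : ℝ) * d)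
      (f := fun ξ => g ξ * eR (x 0 * ξ + x 1 * ξ ^ 2 + x 2 * ξ ^ 3)) (μ := volume)
      (fun k hk => intervalIntegrable_momPhase hg x (hmem k hk.le) (hmem (k + 1) hk))
    rw [hN] at this
    rw [Finset.sum_apply]
    simp only [Nat.cast_zero, zero_mul, Nat.cast_add, Nat.cast_one] at this
    simp only [hG, momExt, zero_add]
    exact this.symm
  have htri : L12 (momExt g 0 1) ≤ ∑ k ∈ Finset.range N, L12 (G k) := by
    have h1 : eLpNorm (momExt g 0 1) 12 volume ≤
        ∑ k ∈ Finset.range N, eLpNorm (G k) 12 volume := by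
      rw [hsum]
      exact eLpNorm_sum_le (fun k hk => (hGmem k hk).1) (by norm_num)
    have hfin : ∀ k ∈ Finset.range N, eLpNorm (G k) 12 volume ≠ ∞ := fun k hk => (hGmem k hk).2.ne
    rw [L12_eq_toReal hf, Finset.sum_congr rfl fun k hk => L12_eq_toReal (hGmem k hk),
      ← ENNReal.toReal_sum hfin]
    exact ENNReal.toReal_mono (ENNReal.sum_ne_top.2 hfin) h1
  refine htri.trans ?_
  have hle : ∀ k ∈ Finset.range N, L12 (G k) ≤ decSum g 0 d N ^ ((1 : ℝ) / 4) := by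
    intro k hk
    have h4 : L12 (G k) ^ 4 ≤ decSum g 0 d N :=
      Finset.single_le_sum (f := fun k => L12 (G k) ^ 4) (fun _ _ => by positivity) hk
    calc L12 (G k) = (L12 (G k) ^ 4) ^ ((1 : ℝ) / 4) := by
          rw [← Real.rpow_natCast, ← Real.rpow_mul (L12_nonneg _)]; norm_num
      _ ≤ _ := Real.rpow_le_rpow (by positivity) h4 (by norm_num)
  refine (Finset.sum_le_card_nsmul _ _ _ hle).trans (le_of_eq ?_)
  simp

/-! ### Rescaling -/

/-- The linear map of `ℝ³` dual to `ξ = l + σ η`: the phase `x · γ (l + σ η)` equals `x · γ l` plus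
the phase at `η` of the image of `x` under this matrix. -/
def rescaleMat (σ l : ℝ) : Matrix (Fin 3) (Fin 3) ℝ :=
  !![σ, σ * (2 * l), σ * (3 * l ^ 2); 0, σ ^ 2, σ ^ 2 * (3 * l); 0, 0, σ ^ 3]

lemma det_rescaleMat (σ l : ℝ) : (rescaleMat σ l).det = σ ^ 6 := by
  rw [rescaleMat, Matrix.det_fin_three]
  simp
  ring

lemma L12_comp_rescale {σ : ℝ} (hσ : 0 < σ) (l : ℝ) (f : E3 → ℂ) :
    L12 (fun x => f (Matrix.toLin' (rescaleMat σ l) x)) = (σ ^ 6)⁻¹ ^ ((1 : ℝ) / 12) * L12 f := by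
  have hdet : (rescaleMat σ l).det ≠ 0 := by rw [det_rescaleMat]; positivity
  have hmap := Real.map_matrix_volume_pi_eq_smul_volume_pi hdet
  rw [det_rescaleMat, abs_of_pos (by positivity)] at hmap
  have hdet' : LinearMap.det (Matrix.toLin' (rescaleMat σ l)) ≠ 0 := by
    rwa [LinearMap.det_toLin']
  set e := (LinearMap.equivOfDetNeZero _ hdet').toContinuousLinearEquiv.toHomeomorph.toMeasurableEquiv
  have he : ∀ x, e x = Matrix.toLin' (rescaleMat σ l) x := fun x => rfl
  have he' : (e : E3 → E3) = Matrix.toLin' (rescaleMat σ l) := rfl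
  have h1 : ∫ x : E3, ‖f (Matrix.toLin' (rescaleMat σ l) x)‖ ^ 12 =
      (σ ^ 6)⁻¹ * ∫ x : E3, ‖f x‖ ^ 12 := by
    have := integral_map_equiv (μ := (volume : Measure E3)) e (fun x => ‖f x‖ ^ 12)
    rw [he', hmap, integral_smul_measure, ENNReal.toReal_ofReal (by positivity)] at this
    rw [← this]
    simp
  rw [L12, h1, Real.mul_rpow (by positivity) (integral_nonneg fun _ => by positivity), L12]

lemma momExt_rescale (g : ℝ → ℂ) (σ l α β : ℝ) (x : E3) :
    momExt g (l + σ * α) (l + σ * β) x = σ * (eR (x 0 * l + x 1 * l ^ 2 + x 2 * l ^ 3) *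
      momExt (fun η => g (l + σ * η)) α β (Matrix.toLin' (rescaleMat σ l) x)) := by
  rw [momExt, ← intervalIntegral.smul_integral_comp_add_mul, momExt, Complex.real_smul]
  simp only [← intervalIntegral.integral_const_mul]
  refine intervalIntegral.integral_congr fun η _ => ?_
  rw [mul_left_comm (eR _), ← eR_add]
  congr 3
  simp [rescaleMat, Matrix.toLin'_apply, Matrix.mulVec, dotProduct, Fin.sum_univ_three]
  ring

/-- Rescaling multiplies all the `L¹²` norms by the same factor, whatever the interval. -/
lemma L12_momExt_rescale (g : ℝ → ℂ) {σ : ℝ} (hσ : 0 < σ) (l α β : ℝ) :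
    L12 (momExt g (l + σ * α) (l + σ * β)) =
      σ * (σ ^ 6)⁻¹ ^ ((1 : ℝ) / 12) * L12 (momExt (fun η => g (l + σ * η)) α β) := by
  rw [mul_assoc, ← L12_comp_rescale hσ l]
  simp only [L12, momExt_rescale, norm_mul, norm_eR, Complex.norm_real, Real.norm_of_nonneg hσ.le,
    one_mul, mul_pow]
  rw [integral_const_mul, Real.mul_rpow (by positivity) (integral_nonneg fun _ => by positivity),
    ← Real.rpow_natCast, ← Real.rpow_mul hσ.le]
  norm_num

/-- **Parabolic rescaling.** If `0 < δ < σ < 1`, `σ/δ ∈ ℕ`, `δ⁻¹ ∈ ℕ`, and `I = [l, l+σ] ⊆ [0,1]`,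
then `‖E_I g‖₁₂ ≤ D(δ/σ) (∑_{J ∈ P_δ(I)} ‖E_J g‖₁₂⁴)^{1/4}` for all `g`. -/
theorem parabolic_rescaling (δ σ : ℝ) (hδ : 0 < δ) (hδσ : δ < σ) (hσ : σ < 1)
    (h1 : IsNatReal (σ / δ)) (h2 : IsNatReal δ⁻¹)
    (l : ℝ) (hl : 0 ≤ l) (hlσ : l + σ ≤ 1) (g : ℝ → ℂ) :
    L12 (momExt g l (l + σ)) ≤ Dconst (δ / σ) * decSum g l δ ⌊σ / δ⌋₊ ^ ((1 : ℝ) / 4) := by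
  have hσ0 : 0 < σ := hδ.trans hδσ
  obtain ⟨N, hN⟩ := h1
  have hfl : ⌊σ / δ⌋₊ = N := by rw [← hN, Nat.floor_natCast]
  have hNd : (N : ℝ) * (δ / σ) = 1 := by rw [hN]; field_simp
  have hd : 0 ≤ δ / σ := by positivity
  set κ : ℝ := σ * (σ ^ 6)⁻¹ ^ ((1 : ℝ) / 12) with hκ
  have hκ0 : 0 ≤ κ := by positivity
  set h : ℝ → ℂ := fun η => g (l + σ * η) with hh
  have e1 : L12 (momExt g l (l + σ)) = κ * L12 (momExt h 0 1) := by
    have := L12_momExt_rescale g hσ0 l 0 1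
    rwa [mul_zero, add_zero, mul_one] at this
  have hdec : 0 ≤ decSum h 0 (δ / σ) N := Finset.sum_nonneg fun k _ => by positivity
  have e2 : decSum g l δ N ^ ((1 : ℝ) / 4) = κ * decSum h 0 (δ / σ) N ^ ((1 : ℝ) / 4) := by
    have : decSum g l δ N = κ ^ 4 * decSum h 0 (δ / σ) N := by
      rw [decSum, decSum, Finset.mul_sum]
      refine Finset.sum_congr rfl fun k _ => ?_
      rw [← mul_pow, ← L12_momExt_rescale g hσ0]
      congr 3 <;> field_simp <;> ring
    rw [this, Real.mul_rpow (by positivity) hdec, ← Real.rpow_natCast, ← Real.rpow_mul hκ0]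
    norm_num
  have hD : L12 (momExt h 0 1) ≤ Dconst (δ / σ) * decSum h 0 (δ / σ) N ^ ((1 : ℝ) / 4) := by
    rw [Dconst, inv_div, hfl]
    have hne : (N : ℝ) ∈ {C : ℝ | 0 ≤ C ∧ ∀ g : ℝ → ℂ,
        L12 (momExt g 0 1) ≤ C * decSum g 0 (δ / σ) N ^ ((1 : ℝ) / 4)} :=
      ⟨Nat.cast_nonneg N, fun g => crude_decoupling hd hNd g⟩
    -- the infimum is itself admissible for `h`: divide by the sum, unless it vanishes
    rcases (Real.rpow_nonneg hdec ((1 : ℝ) / 4)).eq_or_lt with h0 | h0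
    · have := hne.2 h
      rw [← h0, mul_zero] at this ⊢
      exact this
    · rw [← div_le_iff₀ h0]
      exact le_csInf ⟨_, hne⟩ fun C hC => (div_le_iff₀ h0).2 (hC.2 h)
  rw [hfl, e1, e2, mul_left_comm]
  exact mul_le_mul_of_nonneg_left hD hκ0
end
end
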